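/- arXiv:2412.18002 — 6 statements merged into one kernel-verified Lean document; each statement's English description precedes it below -/
import Mathlib

section
/- For every integer k ≥ 1892, there exists a k-nice set Q ⊆ ℤ² of height at most three such that every k-nice set has cardinality at most the cardinality of Q (i.e., Q is a k-nice set of maximum size). -/
/-- A set `Q ⊆ ℤ²` is `k`-nice if every element is a nonzero coprime pair,
`Q` does not contain both a pair and its negation, and all cross determinants
are bounded by `k` in absolute value. -/
def IsKNice (k : ℕ) (Q : Set (ℤ × ℤ)) : Prop :=
  (∀ p ∈ Q, p ≠ (0, 0) ∧ Int.gcd p.1 p.2 = 1) ∧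
  (∀ p ∈ Q, -p ∉ Q) ∧
  (∀ p ∈ Q, ∀ q ∈ Q, |p.1 * q.2 - q.1 * p.2| ≤ (k : ℤ))

/-- `Q` is y-non-negative: all second coordinates are non-negative. -/
def YNonneg (Q : Set (ℤ × ℤ)) : Prop := ∀ p ∈ Q, 0 ≤ p.2

/-- The height of `Q` is at most `h`. -/
def HeightLe (Q : Set (ℤ × ℤ)) (h : ℕ) : Prop := ∀ p ∈ Q, |p.2| ≤ (h : ℤ)

/-- The height of `Q` is exactly `h`: the maximum of `|n|` over `(m, n) ∈ Q` is `h`. -/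
def HeightEq (Q : Set (ℤ × ℤ)) (h : ℕ) : Prop :=
  HeightLe Q h ∧ ∃ p ∈ Q, |p.2| = (h : ℤ)

/-!
Flipping signs and applying `SL₂(ℤ)` we may assume that the height `h` of a maximal set cannot be
lowered; comparing elements that are extreme for two neighbouring shears then gives `3h² ≤ 4k`.
The elements at height `n` span an interval of some width `ℓ n`, and the cross determinants of the
endpoints give `m ℓ n + n ℓ m ≤ 2k`. For any `d ∣ n`, level `n` has at most `φ(d)/d · ℓ n` elements,
up to an error depending only on `d`, so the size of the set is bounded by a linear program in `ℓ`.
For `4 ≤ h ≤ 180` an explicit dual solution, and for larger `h` the comparison of `∑ ℓ n` with an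
integral over a quarter circle, show that the set has at most `k + 2` elements. This size is already
attained by the height-one set `{(1, 0)} ∪ {(i, 1) | 0 ≤ i ≤ k}`, so some set of height at most
three is a largest one.
-/

open Finset

section UnitCount

/-- The discrepancy of the units modulo `d`, scaled by `d`: the largest excess of the number of
units in `[0, s]` over `φ d / d * s`, plus the largest deficit of the number of units in `[0, s)`,
over all units `s < d`. Truncated subtraction replaces negative entries of the two suprema by
`0`. -/
def unitError (d : ℕ) : ℕ :=
  ({s ∈ range d | d.Coprime s}.sup fun s ↦ d * (Nat.count d.Coprime s + 1) - d.totient * s) +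
    {s ∈ range d | d.Coprime s}.sup fun s ↦ d.totient * s - d * Nat.count d.Coprime s

theorem count_coprime_mul_add (d m s : ℕ) :
    Nat.count d.Coprime (d * m + s) = d.totient * m + Nat.count d.Coprime s := by
  induction m with
  | zero => simp
  | succ m ih =>
    have h_period : Nat.count d.Coprime d = d.totient := Nat.count_eq_card_filter_range _ _
    rw [show d * (m + 1) + s = d + (d * m + s) by ring, Nat.count_add, h_period]
    simp only [Nat.coprime_self_add_right, ih]
    ring

theorem mul_count_coprime_sub_le_unitError {d a b : ℕ} (hd : 0 < d) (ha : d.Coprime a)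
    (hb : d.Coprime b) :
    (d * (Nat.count d.Coprime b + 1) - d.totient * b) +
      (d.totient * a - d * Nat.count d.Coprime a) ≤ unitError d := by
  have h_residue : ∀ x, d.Coprime x → x % d ∈ {s ∈ range d | d.Coprime s} := fun x hx ↦
    mem_filter.2 ⟨mem_range.2 (x.mod_lt hd),
      Nat.coprime_comm.1 <| (Nat.mod_modEq x d).gcd_eq.trans hx.symm⟩
  have h_count : ∀ x, d * Nat.count d.Coprime x =
      d.totient * (d * (x / d)) + d * Nat.count d.Coprime (x % d) := fun x ↦ by
    nth_rw 1 [← Nat.div_add_mod x d, count_coprime_mul_add]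
    ring
  have h_split : ∀ x, d.totient * x = d.totient * (d * (x / d)) + d.totient * (x % d) := fun x ↦ by
    rw [← mul_add, Nat.div_add_mod]
  refine add_le_add ?_ ?_
  · convert le_sup (f := fun s ↦ d * (Nat.count d.Coprime s + 1) - d.totient * s)
      (h_residue b hb) using 1
    rw [mul_add_one, mul_add_one, h_count, h_split b, add_assoc, Nat.add_sub_add_left]
  · convert le_sup (f := fun s ↦ d.totient * s - d * Nat.count d.Coprime s)
      (h_residue a ha) using 1
    rw [h_count, h_split a, Nat.add_sub_add_left]

theorem mul_card_filter_Icc_coprime_le {d a b : ℕ} (hd : 0 < d) (hab : a ≤ b) (ha : d.Coprime a)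
    (hb : d.Coprime b) :
    d * #{x ∈ Icc a b | d.Coprime x} ≤ d.totient * (b - a) + unitError d := by
  have h_card : #{x ∈ Icc a b | d.Coprime x} + Nat.count d.Coprime a =
      Nat.count d.Coprime b + 1 := by
    rw [← Nat.count_succ_eq_succ_count_iff.2 hb, Nat.count_eq_card_filter_range,
      Nat.count_eq_card_filter_range, ← card_union_of_disjoint]
    · congr 1
      grind
    · exact disjoint_left.2 (by grind)
  have h_error := mul_count_coprime_sub_le_unitError hd ha hb
  rw [← h_card, mul_add] at h_error
  rw [Nat.mul_sub]
  omega

theorem mul_card_le_totient_mul_sub_add_unitError {d : ℕ} (hd : 0 < d) {S : Finset ℤ} {a b : ℤ}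
    (ha : a ∈ S) (hb : b ∈ S) (hS : S ⊆ Icc a b) (h_coprime : ∀ x ∈ S, Int.gcd x d = 1) :
    d * #S ≤ d.totient * (b - a).toNat + unitError d := by
  set t : ℤ → ℕ := fun x ↦ (x - d * (a / d)).toNat
  have h_shift : ∀ x ∈ S, (t x : ℤ) = x - d * (a / d) := fun x hx ↦ by
    have := Int.mul_ediv_self_le (x := a) (k := d) (by omega)
    exact Int.toNat_of_nonneg (by linarith [(mem_Icc.1 (hS hx)).1])
  have ht_coprime : ∀ x ∈ S, d.Coprime (t x) := fun x hx ↦ by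
    rw [Nat.coprime_comm, Nat.Coprime, ← Int.gcd_natCast_natCast, h_shift x hx]
    simpa using h_coprime x hx
  have ht_le : ∀ x ∈ S, ∀ y ∈ S, x ≤ y → t x ≤ t y := fun x hx y hy hxy ↦ by
    have := h_shift x hx
    have := h_shift y hy
    omega
  have h_card : #S ≤ #{x ∈ Icc (t a) (t b) | d.Coprime x} := by
    refine card_le_card_of_injOn t (fun x hx ↦ ?_) fun x hx y hy hxy ↦ ?_
    · obtain ⟨hax, hxb⟩ := mem_Icc.1 (hS hx)
      simpa using ⟨⟨ht_le a ha x hx hax, ht_le x hx b hb hxb⟩, ht_coprime x hx⟩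
    · have := h_shift x hx
      have := h_shift y hy
      omega
  have hab := (mem_Icc.1 (hS ha)).2
  have h_sub : t b - t a = (b - a).toNat := by
    have := h_shift a ha
    have := h_shift b hb
    omega
  rw [← h_sub]
  exact (Nat.mul_le_mul_left d h_card).trans <|
    mul_card_filter_Icc_coprime_le hd (ht_le a ha b hb hab) (ht_coprime a ha) (ht_coprime b hb)

end UnitCount

section PairBounded

/-- The pairwise constraint satisfied, with `c = 2 * k`, by the widths `l n` of the levels
`1 ≤ n ≤ h` of a `k`-nice set that has an element at height `h`. -/
def PairBounded (l : ℕ → ℕ) (h c : ℕ) : Prop :=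
  ∀ m ∈ Icc 1 h, ∀ n ∈ Icc 1 h, m * l n + n * l m ≤ c

/-- The cost of the dual solution, built greedily from the outside in, of the linear program
maximising `∑ n, w n * l n` under the constraints `m * l n + n * l m ≤ 1`. The levels still to be
covered are `i, …, i + d`; the weights left at the two ends are `r` and `s`. All divisions are
rounded up, and the final single level `i` carries both leftovers. -/
def greedyDual (w : ℕ → ℕ) : ℕ → ℕ → ℕ → ℕ → ℕ
  | 0, i, r, s => (r + s) / (2 * i) + 1
  | d + 1, i, r, s =>
    if r * i ≤ s * (i + (d + 1)) then
      let t := r / (i + (d + 1)) + 1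
      t + greedyDual w d (i + 1) (if d = 0 then 0 else w (i + 1)) (s - t * i)
    else
      let t := s / i + 1
      t + greedyDual w d i (r - t * (i + (d + 1))) (if d = 0 then 0 else w (i + d))

theorem le_div_add_one_mul (a : ℕ) {b : ℕ} (hb : 0 < b) : a ≤ (a / b + 1) * b := by
  rw [mul_comm]
  exact (Nat.lt_mul_div_succ a hb).le

theorem sum_Ioo_add_succ_eq_add_left (f : ℕ → ℕ) (i d : ℕ) :
    ∑ n ∈ Ioo i (i + (d + 1)), f n =
      (if d = 0 then 0 else f (i + 1)) + ∑ n ∈ Ioo (i + 1) (i + (d + 1)), f n := by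
  split_ifs with hd
  · subst hd
    simp [Ioo_eq_empty]
  · rw [← sum_insert (by simp)]
    congr 1
    grind

theorem sum_Ioo_add_succ_eq_add_right (f : ℕ → ℕ) (i d : ℕ) :
    ∑ n ∈ Ioo i (i + (d + 1)), f n =
      (if d = 0 then 0 else f (i + d)) + ∑ n ∈ Ioo i (i + d), f n := by
  split_ifs with hd
  · subst hd
    simp
  · rw [← sum_insert (by simp)]
    congr 1
    grind

theorem mul_add_mul_le_of_le_mul {r s t i j x y c : ℕ} (hr : r ≤ t * j) (hc : i * y + j * x ≤ c) :
    r * x + s * y ≤ c * t + (s - t * i) * y :=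
  calc r * x + s * y ≤ t * j * x + (t * i + (s - t * i)) * y := by gcongr; omega
    _ = (i * y + j * x) * t + (s - t * i) * y := by ring
    _ ≤ c * t + (s - t * i) * y := by gcongr

theorem add_sum_Ioo_le_mul_greedyDual {w l : ℕ → ℕ} {h c : ℕ} (hl : PairBounded l h c) :
    ∀ {d i : ℕ} (r s : ℕ), 1 ≤ i → i + d ≤ h →
      r * l i + s * l (i + d) + ∑ n ∈ Ioo i (i + d), w n * l n ≤ c * greedyDual w d i r s := by
  intro d
  induction d with
  | zero =>
    intro i r s hi hih
    have h_pair := hl i (mem_Icc.2 ⟨hi, hih⟩) i (mem_Icc.2 ⟨hi, hih⟩)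
    have h_ceil := le_div_add_one_mul (r + s) (b := 2 * i) (by omega)
    simp only [greedyDual, add_zero, Ioo_self, sum_empty]
    calc r * l i + s * l i = (r + s) * l i := by ring
      _ ≤ ((r + s) / (2 * i) + 1) * (2 * i) * l i := Nat.mul_le_mul_right _ h_ceil
      _ = ((r + s) / (2 * i) + 1) * (i * l i + i * l i) := by ring
      _ ≤ c * ((r + s) / (2 * i) + 1) := by rw [mul_comm c]; exact Nat.mul_le_mul_left _ h_pair
  | succ d ih =>
    intro i r s hi hih
    have h_pair := hl i (mem_Icc.2 ⟨hi, by omega⟩) (i + (d + 1)) (mem_Icc.2 ⟨by omega, hih⟩)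
    rw [greedyDual]
    by_cases h_side : r * i ≤ s * (i + (d + 1))
    · have h_step := mul_add_mul_le_of_le_mul (s := s)
        (le_div_add_one_mul r (b := i + (d + 1)) (by omega)) h_pair
      have h_rec := ih (if d = 0 then 0 else w (i + 1)) (s - (r / (i + (d + 1)) + 1) * i)
        (i := i + 1) (by omega) (by omega)
      rw [show i + 1 + d = i + (d + 1) by ring, ite_mul, zero_mul] at h_rec
      rw [if_pos h_side, sum_Ioo_add_succ_eq_add_left, mul_add]
      omega
    · have h_step := mul_add_mul_le_of_le_mul (s := r) (le_div_add_one_mul s hi)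
        ((add_comm _ _).trans_le h_pair)
      have h_rec := ih (r - (s / i + 1) * (i + (d + 1))) (if d = 0 then 0 else w (i + d)) hi
        (by omega)
      rw [ite_mul, zero_mul] at h_rec
      rw [if_neg h_side, sum_Ioo_add_succ_eq_add_right, mul_add]
      omega

theorem PairBounded.sum_mul_le_mul_greedyDual {l : ℕ → ℕ} {h c : ℕ} (hl : PairBounded l h c)
    (w : ℕ → ℕ) (hh : 2 ≤ h) :
    ∑ n ∈ Icc 1 h, w n * l n ≤ c * greedyDual w (h - 1) 1 (w 1) (w h) := by
  have h_bound := add_sum_Ioo_le_mul_greedyDual hl (w := w) (w 1) (w h) le_rfl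
    (show 1 + (h - 1) ≤ h by omega)
  rw [show 1 + (h - 1) = h by omega] at h_bound
  rw [← add_sum_Ioc_eq_sum_Icc (by omega), ← sum_Ioo_add_eq_sum_Ioc (by omega)]
  omega

end PairBounded

section CircleBound

open MeasureTheory intervalIntegral Real

theorem image_mul_sin_Ioo {R : ℝ} (hR : 0 < R) :
    (fun t ↦ R * sin t) '' Set.Ioo 0 (π / 2) = Set.Ioo 0 R := by
  ext x
  constructor
  · rintro ⟨t, ⟨h₀, h₁⟩, rfl⟩
    have h_sin_pos : 0 < sin t := sin_pos_of_pos_of_lt_pi h₀ (by linarith)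
    have h_sin_lt : sin t < 1 := by
      simpa using sin_lt_sin_of_lt_of_le_pi_div_two (by linarith) le_rfl h₁
    exact ⟨mul_pos hR h_sin_pos, by nlinarith⟩
  · rintro ⟨h₀, h₁⟩
    have h_lt : x / R < 1 := (div_lt_one hR).2 h₁
    have h_pos : 0 < x / R := div_pos h₀ hR
    refine ⟨arcsin (x / R), ⟨arcsin_pos.2 h_pos, arcsin_lt_pi_div_two.2 h_lt⟩, ?_⟩
    simp only [sin_arcsin (by linarith) h_lt.le]
    field_simp

theorem hasDerivWithinAt_mul_sin (R t : ℝ) (s : Set ℝ) :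
    HasDerivWithinAt (fun t ↦ R * sin t) (R * cos t) s t :=
  ((hasDerivAt_sin t).const_mul R).hasDerivWithinAt

theorem injOn_mul_sin {R : ℝ} (hR : R ≠ 0) :
    Set.InjOn (fun t ↦ R * sin t) (Set.Ioo 0 (π / 2)) := fun x hx y hy hxy ↦
  injOn_sin ⟨by linarith [hx.1, pi_pos], hx.2.le⟩ ⟨by linarith [hy.1, pi_pos], hy.2.le⟩
    (mul_left_cancel₀ hR hxy)

theorem abs_deriv_smul_comp_eqOn {R : ℝ} (hR : 0 ≤ R) (g : ℝ → ℝ) :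
    Set.EqOn (fun t ↦ |R * cos t| • g (R * sin t)) (fun t ↦ R * cos t * g (R * sin t))
      (Set.Ioo 0 (π / 2)) := fun t ht ↦ by
  have h_cos := cos_nonneg_of_mem_Icc ⟨by linarith [ht.1, pi_pos], ht.2.le⟩
  simp only [abs_of_nonneg (mul_nonneg hR h_cos), smul_eq_mul]

/-- Substituting `x = R * sin t` and `x = R * cos t` writes the integral of `g` in two ways whose
sum has integrand `x * g y + y * g x` at the point `(x, y)` of the circle. -/
theorem integral_le_of_add_le_on_circle {g : ℝ → ℝ} {R c : ℝ} (hR : 0 < R)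
    (hg : IntervalIntegrable g volume 0 R)
    (hc : ∀ x > 0, ∀ y > 0, x ^ 2 + y ^ 2 = R ^ 2 → x * g y + y * g x ≤ c) :
    ∫ x in 0..R, g x ≤ π / 4 * c := by
  set F : ℝ → ℝ := fun t ↦ R * cos t * g (R * sin t)
  have h_eqOn := abs_deriv_smul_comp_eqOn hR.le g
  have h_subst : ∫ x in 0..R, g x = ∫ t in 0..π / 2, F t := by
    rw [integral_of_le hR.le, integral_of_le (by positivity), integral_Ioc_eq_integral_Ioo,
      integral_Ioc_eq_integral_Ioo, ← image_mul_sin_Ioo hR,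
      integral_image_eq_integral_abs_deriv_smul measurableSet_Ioo
        (fun t _ ↦ hasDerivWithinAt_mul_sin R t _) (injOn_mul_sin hR.ne')]
    exact setIntegral_congr_fun measurableSet_Ioo h_eqOn
  have hF : IntervalIntegrable F volume 0 (π / 2) := by
    rw [intervalIntegrable_iff_integrableOn_Ioo_of_le (by positivity)]
    refine (integrableOn_congr_fun h_eqOn measurableSet_Ioo).1 ?_
    rw [← integrableOn_image_iff_integrableOn_abs_deriv_smul measurableSet_Ioo
      (fun t _ ↦ hasDerivWithinAt_mul_sin R t _) (injOn_mul_sin hR.ne'), image_mul_sin_Ioo hR]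
    exact (intervalIntegrable_iff_integrableOn_Ioo_of_le hR.le).1 hg
  have h_reflect : ∫ t in 0..π / 2, F (π / 2 - t) = ∫ t in 0..π / 2, F t := by
    simp
  have hF' : IntervalIntegrable (fun t ↦ F (π / 2 - t)) volume 0 (π / 2) := by
    simpa using (hF.comp_sub_left (π / 2)).symm
  have h_add : ∫ t in 0..π / 2, (F t + F (π / 2 - t)) ≤ ∫ _t in 0..π / 2, c := by
    refine integral_mono_on_of_le_Ioo (by positivity) (hF.add hF') (by simp) fun t ht ↦ ?_
    have h_sin : 0 < sin t := sin_pos_of_pos_of_lt_pi ht.1 (by linarith [ht.2, pi_pos])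
    have h_cos : 0 < cos t := cos_pos_of_mem_Ioo ⟨by linarith [ht.1, pi_pos], ht.2⟩
    simpa [F, cos_pi_div_two_sub, sin_pi_div_two_sub] using
      hc (R * cos t) (by positivity) (R * sin t) (by positivity)
        (by rw [mul_pow, mul_pow, ← mul_add, cos_sq_add_sin_sq, mul_one])
  rw [integral_add hF hF', h_reflect, ← h_subst, intervalIntegral.integral_const,
    smul_eq_mul] at h_add
  linarith

theorem PairBounded.sum_le_of_antitone {M : ℕ → ℕ} {h c : ℕ} (hM : PairBounded M h c)
    (h_anti : Antitone M) (hh : 0 < h) : ∑ n ∈ Icc 1 h, (M n : ℝ) ≤ π / 4 * c := by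
  have hg : Antitone fun x : ℝ ↦ (M ⌈x⌉₊ : ℝ) := fun x y hxy ↦
    Nat.cast_le.2 (h_anti (Nat.ceil_mono hxy))
  have h_sum : ∑ n ∈ Icc 1 h, (M n : ℝ) ≤ ∫ x in (0 : ℝ)..h, (M ⌈x⌉₊ : ℝ) := by
    have h_integral := (hg.antitoneOn (Set.Icc ((0 : ℕ) : ℝ) h)).sum_le_integral_Ico h.zero_le
    rw [sum_Ico_add' (fun n : ℕ ↦ (M ⌈(n : ℝ)⌉₊ : ℝ))] at h_integral
    simpa [Ico_add_one_right_eq_Icc] using h_integral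
  refine h_sum.trans (integral_le_of_add_le_on_circle (by exact_mod_cast hh)
    hg.intervalIntegrable fun x hx y hy hxy ↦ ?_)
  have h_ceil : ∀ z : ℝ, 0 < z → z ^ 2 ≤ (h : ℝ) ^ 2 → ⌈z⌉₊ ∈ Icc 1 h := fun z hz hzh ↦
    mem_Icc.2 ⟨Nat.ceil_pos.2 hz, Nat.ceil_le.2 (le_of_sq_le_sq hzh h.cast_nonneg)⟩
  calc x * M ⌈y⌉₊ + y * M ⌈x⌉₊ ≤ ⌈x⌉₊ * M ⌈y⌉₊ + ⌈y⌉₊ * M ⌈x⌉₊ := by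
        gcongr <;> exact Nat.le_ceil _
    _ ≤ c := by
        exact_mod_cast hM _ (h_ceil x hx (by nlinarith)) _ (h_ceil y hy (by nlinarith))

end CircleBound

section PeriodicWeights

theorem sum_mul_le_of_sum_le_linear {a M : ℕ → ℝ} {A δ : ℝ} (hM : Antitone M) (hM₀ : ∀ n, 0 ≤ M n)
    (ha : ∀ j : ℕ, ∑ n ∈ Icc 1 j, a n ≤ A * j + δ) {h : ℕ} (hh : 1 ≤ h) :
    ∑ n ∈ Icc 1 h, a n * M n ≤ A * ∑ n ∈ Icc 1 h, M n + δ * M 1 := by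
  suffices h_slack : ∑ n ∈ Icc 1 h, a n * M n + (A * h + δ - ∑ n ∈ Icc 1 h, a n) * M h ≤
      A * ∑ n ∈ Icc 1 h, M n + δ * M 1 by
    linarith [mul_nonneg (sub_nonneg.2 (ha h)) (hM₀ h)]
  induction h, hh using Nat.le_induction with
  | base =>
    simp only [Icc_self, sum_singleton]
    push_cast
    linarith
  | succ h hh ih =>
    have h_mono := mul_le_mul_of_nonneg_left (hM h.le_succ) (sub_nonneg.2 (ha h))
    simp only [sum_Icc_succ_top (show 1 ≤ h + 1 by omega), Nat.succ_eq_add_one] at h_mono ⊢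
    push_cast
    linarith

theorem sum_Icc_one_eq_sum_range {M : Type*} [AddCommMonoid M] (f : ℕ → M) (n : ℕ) :
    ∑ i ∈ Icc 1 n, f i = ∑ i ∈ range n, f (i + 1) := by
  rw [range_eq_Ico, sum_Ico_add' f, zero_add, Ico_add_one_right_eq_Icc]

theorem sum_le_linear_of_periodic {f : ℕ → ℕ} {p q A B : ℕ} (hp : 0 < p)
    (hf : Function.Periodic f p) (h_period : q * ∑ i ∈ Icc 1 p, f i ≤ A * p)
    (h_small : ∀ j < p, q * ∑ i ∈ Icc 1 j, f i ≤ A * j + B) (j : ℕ) :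
    q * ∑ i ∈ Icc 1 j, f i ≤ A * j + B := by
  induction j using Nat.strong_induction_on with
  | _ j ih =>
    rcases lt_or_ge j p with hj | hj
    · exact h_small j hj
    · obtain ⟨i, rfl⟩ := Nat.exists_eq_add_of_le hj
      have h_shift : ∀ x, f (p + x + 1) = f (x + 1) := fun x ↦ by
        rw [show p + x + 1 = x + 1 + p by ring, hf]
      have h_split : ∑ n ∈ Icc 1 (p + i), f n = ∑ n ∈ Icc 1 p, f n + ∑ n ∈ Icc 1 i, f n := by
        simp only [sum_Icc_one_eq_sum_range, sum_range_add, h_shift]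
      rw [h_split]
      linarith [ih i (by omega)]

theorem PairBounded.sup_Icc {l : ℕ → ℕ} {h c : ℕ} (hl : PairBounded l h c) :
    PairBounded (fun n ↦ (Icc n h).sup l) h c := by
  intro m hm n hn
  obtain ⟨m', hm', h_eq_m⟩ := exists_mem_eq_sup (Icc m h) (nonempty_Icc.2 (mem_Icc.1 hm).2) l
  obtain ⟨n', hn', h_eq_n⟩ := exists_mem_eq_sup (Icc n h) (nonempty_Icc.2 (mem_Icc.1 hn).2) l
  simp only [mem_Icc] at hm hn hm' hn'
  simp only [h_eq_m, h_eq_n]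
  calc m * l n' + n * l m' ≤ m' * l n' + n' * l m' := by gcongr <;> omega
    _ ≤ c := hl m' (mem_Icc.2 (by omega)) n' (mem_Icc.2 (by omega))

theorem PairBounded.sum_mul_le {l : ℕ → ℕ} {h c : ℕ} (hl : PairBounded l h c) (hh : 1 ≤ h)
    {a : ℕ → ℝ} {A δ : ℝ} (ha₀ : ∀ n, 0 ≤ a n) (hA : 0 ≤ A)
    (ha : ∀ j : ℕ, ∑ n ∈ Icc 1 j, a n ≤ A * j + δ) :
    ∑ n ∈ Icc 1 h, a n * l n ≤ (A * (Real.pi / 4) + δ / h) * c := by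
  set M : ℕ → ℕ := fun n ↦ (Icc n h).sup l with hM
  have h_anti : Antitone M := fun m n hmn ↦ sup_mono (Icc_subset_Icc_left hmn)
  have hM₁ : (M 1 : ℝ) ≤ c / h := by
    obtain ⟨n, hn, h_eq⟩ := exists_mem_eq_sup (Icc 1 h) (nonempty_Icc.2 hh) l
    rw [le_div_iff₀ (by exact_mod_cast hh), mul_comm]
    have h_pair := hl h (mem_Icc.2 ⟨hh, le_rfl⟩) n hn
    exact_mod_cast (Nat.le_add_right _ _).trans (by simpa only [hM, h_eq] using h_pair)
  have hδ : 0 ≤ δ := by simpa using ha 0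
  calc ∑ n ∈ Icc 1 h, a n * l n ≤ ∑ n ∈ Icc 1 h, a n * M n := sum_le_sum fun n hn ↦ by
        have : l n ≤ M n := le_sup (f := l) (left_mem_Icc.2 (mem_Icc.1 hn).2)
        gcongr
        exact ha₀ n
    _ ≤ A * ∑ n ∈ Icc 1 h, (M n : ℝ) + δ * M 1 :=
        sum_mul_le_of_sum_le_linear (M := fun n ↦ (M n : ℝ))
          (fun m n hmn ↦ Nat.cast_le.2 (h_anti hmn)) (fun n ↦ Nat.cast_nonneg _) ha hh
    _ ≤ A * (Real.pi / 4 * c) + δ * (c / h) := by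
        gcongr
        exact hl.sup_Icc.sum_le_of_antitone h_anti hh
    _ = (A * (Real.pi / 4) + δ / h) * c := by ring

end PeriodicWeights

section Cross

/-- The determinant of the matrix with rows `p` and `q`. -/
def cross (p q : ℤ × ℤ) : ℤ := p.1 * q.2 - q.1 * p.2

theorem eq_or_eq_neg_of_cross_eq_zero {p q : ℤ × ℤ} (hp : Int.gcd p.1 p.2 = 1)
    (hq : Int.gcd q.1 q.2 = 1) (h : cross p q = 0) : q = p ∨ q = -p := by
  obtain ⟨u, v, huv⟩ := Int.isCoprime_iff_gcd_eq_one.2 hp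
  have h_det : p.1 * q.2 = q.1 * p.2 := sub_eq_zero.1 h
  have h_smul : q = (u * q.1 + v * q.2) • p := by
    ext
    · simp only [Prod.smul_fst, smul_eq_mul]
      linear_combination (-q.1) * huv - v * h_det
    · simp only [Prod.smul_snd, smul_eq_mul]
      linear_combination (-q.2) * huv + u * h_det
  have h_unit : IsUnit (u * q.1 + v * q.2) := by
    refine isUnit_of_dvd_one ?_
    rw [← Nat.cast_one, ← hq]
    exact Int.dvd_coe_gcd ⟨p.1, congr_arg Prod.fst h_smul⟩ ⟨p.2, congr_arg Prod.snd h_smul⟩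
  rcases Int.isUnit_iff.1 h_unit with h_one | h_neg
  · exact .inl (by simpa only [h_one, one_smul] using h_smul)
  · exact .inr (by simpa only [h_neg, neg_smul, one_smul] using h_smul)

end Cross

namespace IsKNice

variable {k : ℕ} {Q : Set (ℤ × ℤ)}

theorem of_eq_of_cross_eq_zero (h_gcd : ∀ p ∈ Q, Int.gcd p.1 p.2 = 1)
    (h_eq : ∀ p ∈ Q, ∀ q ∈ Q, cross p q = 0 → p = q)
    (h_le : ∀ p ∈ Q, ∀ q ∈ Q, |cross p q| ≤ k) : IsKNice k Q := by
  have h_ne : ∀ p ∈ Q, p ≠ (0, 0) := by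
    rintro p hp rfl
    simpa using h_gcd _ hp
  refine ⟨fun p hp ↦ ⟨h_ne p hp, h_gcd p hp⟩, fun p hp h_neg ↦ h_ne p hp ?_, h_le⟩
  have h_self : p = -p := h_eq p hp (-p) h_neg (by simp [cross])
  exact self_eq_neg.1 h_self

theorem gcd_eq_one (hQ : IsKNice k Q) {p : ℤ × ℤ} (hp : p ∈ Q) : Int.gcd p.1 p.2 = 1 :=
  (hQ.1 p hp).2

theorem abs_cross_le (hQ : IsKNice k Q) {p q : ℤ × ℤ} (hp : p ∈ Q) (hq : q ∈ Q) :
    |cross p q| ≤ k :=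
  hQ.2.2 p hp q hq

theorem eq_of_cross_eq_zero (hQ : IsKNice k Q) {p q : ℤ × ℤ} (hp : p ∈ Q) (hq : q ∈ Q)
    (h : cross p q = 0) : p = q := by
  rcases eq_or_eq_neg_of_cross_eq_zero (hQ.gcd_eq_one hp) (hQ.gcd_eq_one hq) h with rfl | rfl
  · rfl
  · exact absurd hq (hQ.2.1 p hp)

theorem injOn_of_abs_cross_eq (hQ : IsKNice k Q) {f : ℤ × ℤ → ℤ × ℤ}
    (hf : ∀ p q, |cross (f p) (f q)| = |cross p q|) : Set.InjOn f Q := fun p hp q hq hpq ↦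
  hQ.eq_of_cross_eq_zero hp hq <| by
    rw [← abs_eq_zero, ← hf, hpq, abs_eq_zero, cross, sub_self]

theorem image (hQ : IsKNice k Q) {f : ℤ × ℤ → ℤ × ℤ}
    (hf : ∀ p q, |cross (f p) (f q)| = |cross p q|)
    (hf_gcd : ∀ p, Int.gcd (f p).1 (f p).2 = Int.gcd p.1 p.2) : IsKNice k (f '' Q) := by
  refine of_eq_of_cross_eq_zero ?_ ?_ ?_
  · rintro _ ⟨p, hp, rfl⟩
    rw [hf_gcd, hQ.gcd_eq_one hp]
  · rintro _ ⟨p, hp, rfl⟩ _ ⟨q, hq, rfl⟩ h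
    rw [hQ.eq_of_cross_eq_zero hp hq (by rwa [← abs_eq_zero, ← hf, abs_eq_zero])]
  · rintro _ ⟨p, hp, rfl⟩ _ ⟨q, hq, rfl⟩
    rw [hf]
    exact hQ.abs_cross_le hp hq

theorem injOn_zmod (hQ : IsKNice k Q) :
    Set.InjOn (fun p : ℤ × ℤ ↦ ((p.1 : ZMod (k + 1)), (p.2 : ZMod (k + 1)))) Q := by
  intro p hp q hq hpq
  obtain ⟨h_fst, h_snd⟩ := Prod.mk.inj hpq
  refine hQ.eq_of_cross_eq_zero hp hq ?_
  have h_dvd : ((k + 1 : ℕ) : ℤ) ∣ cross p q := by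
    rw [← ZMod.intCast_zmod_eq_zero_iff_dvd]
    push_cast [cross]
    rw [h_fst, h_snd, sub_self]
  exact Int.eq_zero_of_abs_lt_dvd h_dvd (by push_cast; linarith [hQ.abs_cross_le hp hq])

theorem finite (hQ : IsKNice k Q) : Q.Finite :=
  Set.Finite.of_injOn (Set.mapsTo_univ _ _) hQ.injOn_zmod Set.finite_univ

theorem ncard_le (hQ : IsKNice k Q) : Q.ncard ≤ (k + 1) ^ 2 := by
  refine (Set.ncard_le_ncard_of_injOn _ (fun p _ ↦ Set.mem_univ _) hQ.injOn_zmod).trans ?_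
  rw [Set.ncard_univ, Nat.card_prod, Nat.card_zmod, sq]

end IsKNice

theorem exists_isKNice_ncard_eq_add_two {k : ℕ} (hk : 0 < k) :
    ∃ Q, IsKNice k Q ∧ HeightLe Q 1 ∧ Q.ncard = k + 2 := by
  set S : Finset (ℤ × ℤ) := insert (1, 0) ((Icc (0 : ℤ) k).image fun i : ℤ ↦ (i, 1)) with hS
  have h_cases : ∀ p ∈ (S : Set (ℤ × ℤ)), p = (1, 0) ∨ ∃ i : ℤ, 0 ≤ i ∧ i ≤ k ∧ p = (i, 1) := by
    intro p hp
    simp only [hS, coe_insert, coe_image, Set.mem_insert_iff, Set.mem_image, mem_coe,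
      mem_Icc] at hp
    exact hp.imp_right fun ⟨i, hi, h⟩ ↦ ⟨i, hi.1, hi.2, h.symm⟩
  refine ⟨S, .of_eq_of_cross_eq_zero ?_ ?_ ?_, ?_, ?_⟩
  · rintro p hp
    obtain rfl | ⟨i, -, -, rfl⟩ := h_cases p hp <;> simp
  · rintro p hp q hq h
    obtain rfl | ⟨i, -, -, rfl⟩ := h_cases p hp <;> obtain rfl | ⟨j, -, -, rfl⟩ := h_cases q hq <;>
      simp_all [cross, sub_eq_zero]
  · rintro p hp q hq
    obtain rfl | ⟨i, hi₀, hik, rfl⟩ := h_cases p hp <;>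
      obtain rfl | ⟨j, hj₀, hjk, rfl⟩ := h_cases q hq <;>
      simp only [cross, abs_le] <;> constructor <;> omega
  · rintro p hp
    obtain rfl | ⟨i, -, -, rfl⟩ := h_cases p hp <;> simp
  · rw [Set.ncard_coe_finset, card_insert_of_notMem (by simp),
      card_image_of_injective _ (Prod.mk_left_injective 1), Int.card_Icc]
    omega

/-- A `k`-nice set in the upper half plane that cannot be made flatter by the shears and the
rotation in `SL₂(ℤ)`: its height is `h`, and after any shear its width is at least `h` as well. -/
structure IsReducedKNice (k h : ℕ) (Q : Finset (ℤ × ℤ)) : Prop where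
  isKNice : IsKNice k (Q : Set (ℤ × ℤ))
  yNonneg : YNonneg (Q : Set (ℤ × ℤ))
  heightLe : HeightLe (Q : Set (ℤ × ℤ)) h
  exists_snd_eq : ∃ p ∈ Q, p.2 = h
  exists_le_abs_shear : ∀ j : ℤ, ∃ p ∈ Q, (h : ℤ) ≤ |p.1 - j * p.2|

namespace IsKNice

variable {k : ℕ} {Q : Set (ℤ × ℤ)}

theorem exists_yNonneg (hQ : IsKNice k Q) {h : ℕ} (h_le : HeightLe Q h) :
    ∃ Q', IsKNice k Q' ∧ YNonneg Q' ∧ HeightLe Q' h ∧ Q'.ncard = Q.ncard := by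
  set f : ℤ × ℤ → ℤ × ℤ := fun p ↦ if p.2 < 0 then -p else p with hf
  have hf_eq : ∀ p, f p = p ∨ f p = -p := fun p ↦ by grind
  have hf_cross : ∀ p q, |cross (f p) (f q)| = |cross p q| := fun p q ↦ by
    rcases hf_eq p with hp | hp <;> rcases hf_eq q with hq | hq <;>
      simp only [hp, hq, cross, Prod.fst_neg, Prod.snd_neg] <;> grind
  have hf_gcd : ∀ p, Int.gcd (f p).1 (f p).2 = Int.gcd p.1 p.2 := fun p ↦ by
    rcases hf_eq p with hp | hp <;> simp [hp]
  refine ⟨f '' Q, hQ.image hf_cross hf_gcd, ?_, ?_,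
    (hQ.injOn_of_abs_cross_eq hf_cross).ncard_image⟩
  · rintro _ ⟨p, -, rfl⟩
    by_cases hp : p.2 < 0
    · simpa [hf, hp] using hp.le
    · simpa [hf, hp] using not_lt.1 hp
  · rintro _ ⟨p, hp, rfl⟩
    rcases hf_eq p with hfp | hfp <;> simpa [hfp] using h_le p hp

theorem exists_shear (hQ : IsKNice k Q) (j : ℤ) :
    ∃ Q', IsKNice k Q' ∧ Q'.ncard = Q.ncard ∧ ∀ p' ∈ Q', ∃ p ∈ Q, p'.2 = p.1 - j * p.2 := by
  set f : ℤ × ℤ → ℤ × ℤ := fun p ↦ (-p.2, p.1 - j * p.2) with hf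
  have hf_cross : ∀ p q, |cross (f p) (f q)| = |cross p q| := fun p q ↦ by
    simp only [hf, cross]
    ring_nf
  have hf_gcd : ∀ p, Int.gcd (f p).1 (f p).2 = Int.gcd p.1 p.2 := fun p ↦ by
    simp [hf, Int.gcd_comm p.2]
  refine ⟨f '' Q, hQ.image hf_cross hf_gcd,
    (hQ.injOn_of_abs_cross_eq hf_cross).ncard_image, ?_⟩
  rintro _ ⟨p, hp, rfl⟩
  exact ⟨p, hp, rfl⟩

theorem exists_isReducedKNice (hQ : IsKNice k Q) (h_nonempty : Q.Nonempty) :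
    ∃ h, ∃ Q' : Finset (ℤ × ℤ), IsReducedKNice k h Q' ∧ #Q' = Q.ncard := by
  have h_exists : ∃ h Q', IsKNice k Q' ∧ HeightLe Q' h ∧ Q'.ncard = Q.ncard := by
    refine ⟨hQ.finite.toFinset.sup fun p ↦ p.2.natAbs, Q, hQ, fun p hp ↦ ?_, rfl⟩
    rw [Int.abs_eq_natAbs, Nat.cast_le]
    exact le_sup (f := fun p : ℤ × ℤ ↦ p.2.natAbs) (hQ.finite.mem_toFinset.2 hp)
  classical
  set h := Nat.find h_exists
  have h_minimal : ∀ Q', IsKNice k Q' → Q'.ncard = Q.ncard → ∃ p ∈ Q', (h : ℤ) ≤ |p.2| := by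
    intro Q' hQ' h_card
    by_contra! h_lt
    obtain ⟨p, hp⟩ : Q'.Nonempty := Set.nonempty_of_ncard_ne_zero
      (h_card ▸ (Set.ncard_pos hQ.finite).2 h_nonempty).ne'
    have h_pos := (abs_nonneg _).trans_lt (h_lt p hp)
    refine Nat.find_min h_exists (m := h - 1) (by omega) ⟨Q', hQ', fun p hp ↦ ?_, h_card⟩
    have := h_lt p hp
    omega
  obtain ⟨Q₁, hQ₁, h_le₁, h_card₁⟩ := Nat.find_spec h_exists
  obtain ⟨Q₂, hQ₂, h_nonneg, h_le, h_card₂⟩ := hQ₁.exists_yNonneg h_le₁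
  have h_card : Q₂.ncard = Q.ncard := h_card₂.trans h_card₁
  lift Q₂ to Finset (ℤ × ℤ) using hQ₂.finite
  refine ⟨h, Q₂, ⟨hQ₂, h_nonneg, h_le, ?_, fun j ↦ ?_⟩, by rw [← h_card, Set.ncard_coe_finset]⟩
  · obtain ⟨p, hp, h_le_snd⟩ := h_minimal Q₂ hQ₂ h_card
    rw [abs_of_nonneg (h_nonneg p hp)] at h_le_snd
    exact ⟨p, hp, h_le_snd.antisymm' (by simpa [abs_of_nonneg (h_nonneg p hp)] using h_le p hp)⟩
  · obtain ⟨Q₃, hQ₃, h_card₃, h_shear⟩ := hQ₂.exists_shear j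
    obtain ⟨p', hp', h_le_snd⟩ := h_minimal Q₃ hQ₃ (h_card₃.trans h_card)
    obtain ⟨p, hp, h_eq⟩ := h_shear p' hp'
    exact ⟨p, hp, h_eq ▸ h_le_snd⟩

end IsKNice

section HeightBound

theorem four_mul_le_sq_of_mem_Icc {H m b c : ℤ} (hm : m ∈ Set.Icc 0 H) (hb : b ∈ Set.Icc 0 H)
    (hc : c ∈ Set.Icc 0 H) :
    4 * (m * b) ≤ H ^ 2 ∨ 4 * ((H - m) * c) ≤ H ^ 2 ∨ 4 * ((H - b) * (H - c)) ≤ H ^ 2 := by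
  have h_amgm : ∀ x : ℤ, 4 * (x * (H - x)) ≤ H ^ 2 := fun x ↦ by
    linarith [sq_nonneg (H - 2 * x)]
  have h_nonneg : ∀ x ∈ Set.Icc 0 H, 0 ≤ x * (H - x) := fun x hx ↦
    mul_nonneg hx.1 (sub_nonneg.2 hx.2)
  by_contra! h
  have h_lt : H ^ 2 * H ^ 2 * H ^ 2 <
      4 * (m * b) * (4 * ((H - m) * c)) * (4 * ((H - b) * (H - c))) := by
    obtain ⟨h₁, h₂, h₃⟩ := h
    have := sq_nonneg H
    gcongr
  have h_le : 4 * (m * (H - m)) * (4 * (b * (H - b))) * (4 * (c * (H - c))) ≤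
      H ^ 2 * H ^ 2 * H ^ 2 := by
    have := h_nonneg m hm
    have := h_nonneg b hb
    have := h_nonneg c hc
    gcongr <;> exact h_amgm _
  linarith

theorem IsKNice.cross_le {k : ℕ} {Q : Set (ℤ × ℤ)} (hQ : IsKNice k Q) {q r : ℤ × ℤ}
    (hq : q ∈ Q ∨ -q ∈ Q) (hr : r ∈ Q ∨ -r ∈ Q) : cross q r ≤ k := by
  refine (le_abs_self _).trans ?_
  rcases hq with hq | hq <;> rcases hr with hr | hr <;>
    simpa [cross, abs_sub_comm, neg_add_eq_sub] using hQ.abs_cross_le hq hr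

namespace IsReducedKNice

variable {k h : ℕ} {Q : Finset (ℤ × ℤ)}

theorem exists_le_shear (hQ : IsReducedKNice k h Q) (i : ℤ) :
    ∃ q, (q ∈ Q ∨ -q ∈ Q) ∧ (h : ℤ) ≤ q.1 - i * q.2 := by
  obtain ⟨q, hq, h_le⟩ := hQ.exists_le_abs_shear i
  rcases le_abs.1 h_le with h_le | h_le
  · exact ⟨q, .inl hq, h_le⟩
  · exact ⟨-q, .inr (by rwa [neg_neg]), by simp only [Prod.fst_neg, Prod.snd_neg]; linarith⟩

/-- Shearing by the two integers around `p.1 / h`, where `p` is an element at height `h`, gives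
`q` and `r`; the three cross determinants of `p`, `q` and `r` cannot all be less than
`3 / 4 * h ^ 2`. -/
theorem three_mul_sq_le (hQ : IsReducedKNice k h Q) (hh : 0 < h) :
    3 * h ^ 2 ≤ 4 * k := by
  have h_snd : ∀ q, q ∈ Q ∨ -q ∈ Q → |q.2| ≤ h := fun q hq ↦ by
    rcases hq with hq | hq <;> simpa using hQ.heightLe _ hq
  obtain ⟨p, hp, hph⟩ := hQ.exists_snd_eq
  obtain ⟨q, hq, hqj⟩ := hQ.exists_le_shear (p.1 / h)
  obtain ⟨r, hr, hrj⟩ := hQ.exists_le_shear (p.1 / h + 1)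
  have hqp := hQ.isKNice.cross_le hq (.inl hp)
  have hrp := hQ.isKNice.cross_le hr (.inl hp)
  have hrq := hQ.isKNice.cross_le hr hq
  have hq_snd := (abs_le.1 (h_snd q hq)).2
  have hr_snd := (abs_le.1 (h_snd r hr)).1
  have hm : 0 ≤ p.1 % h := Int.emod_nonneg _ (by omega)
  have hmh : p.1 % h < h := Int.emod_lt_of_pos _ (by omega)
  have hp_fst : p.1 = h * (p.1 / h) + p.1 % h := (Int.mul_ediv_add_emod p.1 h).symm
  simp only [cross, hph] at hqp hrp hrq
  generalize p.1 / h = j, p.1 % h = m at *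
  by_contra! h_lt
  zify at h_lt
  have hmq : (h : ℤ) ^ 2 < 4 * (m * q.2) := by
    rw [hp_fst] at hqp
    nlinarith
  have hmr : (h : ℤ) ^ 2 < 4 * ((h - m) * -r.2) := by
    rw [hp_fst] at hrp
    nlinarith
  have hq_pos : 0 < q.2 := by
    by_contra! h_neg
    linarith [sq_nonneg (h : ℤ), mul_nonpos_of_nonneg_of_nonpos hm h_neg]
  have hr_pos : 0 < -r.2 := by
    by_contra! h_neg
    linarith [sq_nonneg (h : ℤ), mul_nonpos_of_nonneg_of_nonpos (sub_nonneg.2 hmh.le) h_neg]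
  have hqr : (h : ℤ) ^ 2 < 4 * ((h - q.2) * (h - -r.2)) := by
    linarith [mul_le_mul_of_nonneg_right hrj hq_pos.le, mul_le_mul_of_nonneg_right hqj hr_pos.le]
  rcases four_mul_le_sq_of_mem_Icc ⟨hm, hmh.le⟩ ⟨hq_pos.le, hq_snd⟩ ⟨hr_pos.le, neg_le.1 hr_snd⟩
    with h_le | h_le | h_le <;> linarith

end IsReducedKNice

end HeightBound

section Levels

/-- The first coordinates of the elements of `Q` on the horizontal line at height `n`. -/
def level (Q : Finset (ℤ × ℤ)) (n : ℕ) : Finset ℤ :=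
  (Q.filter fun p ↦ p.2 = (n : ℤ)).image Prod.fst

/-- The distance between the extreme elements of a set of integers, which is `0` for `∅`. -/
def width (S : Finset ℤ) : ℕ := (S ×ˢ S).sup fun p ↦ (p.2 - p.1).toNat

theorem mem_level {Q : Finset (ℤ × ℤ)} {n : ℕ} {x : ℤ} : x ∈ level Q n ↔ (x, (n : ℤ)) ∈ Q := by
  simp [level]

theorem exists_width_eq {S : Finset ℤ} (hS : S.Nonempty) :
    ∃ a ∈ S, ∃ b ∈ S, S ⊆ Icc a b ∧ (width S : ℤ) = b - a := by
  have h_mem := fun x (hx : x ∈ S) ↦ And.intro (S.min'_le x hx) (S.le_max' x hx)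
  refine ⟨S.min' hS, S.min'_mem hS, S.max' hS, S.max'_mem hS, fun x hx ↦ mem_Icc.2 (h_mem x hx), ?_⟩
  have h_width : width S = (S.max' hS - S.min' hS).toNat := by
    refine le_antisymm (Finset.sup_le fun p hp ↦ ?_) ?_
    · have h_fst := h_mem p.1 (mem_product.1 hp).1
      have h_snd := h_mem p.2 (mem_product.1 hp).2
      omega
    · exact le_sup (f := fun p : ℤ × ℤ ↦ (p.2 - p.1).toNat)
        (mk_mem_product (S.min'_mem hS) (S.max'_mem hS))
  rw [h_width, Int.toNat_sub_of_le (S.min'_le_max' hS)]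

theorem card_eq_sum_card_level {h : ℕ} {Q : Finset (ℤ × ℤ)} (h_nonneg : YNonneg (Q : Set (ℤ × ℤ)))
    (h_le : HeightLe (Q : Set (ℤ × ℤ)) h) : #Q = ∑ n ∈ range (h + 1), #(level Q n) := by
  rw [card_eq_sum_card_fiberwise (f := fun p ↦ p.2.toNat) (t := range (h + 1))]
  · refine sum_congr rfl fun n _ ↦ ?_
    have h_filter : (Q.filter fun p ↦ p.2.toNat = n) =
        Q.filter fun p ↦ p.2 = (n : ℤ) := filter_congr fun p hp ↦ by
      have := h_nonneg p hp
      omega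
    rw [level, h_filter, card_image_of_injOn]
    intro p hp q hq hpq
    exact Prod.ext hpq ((mem_filter.1 hp).2.trans (mem_filter.1 hq).2.symm)
  · intro p hp
    have := (abs_le.1 (h_le p hp)).2
    simp only [coe_range, Set.mem_Iio]
    omega

namespace IsKNice

variable {k : ℕ} {Q : Finset (ℤ × ℤ)}

theorem card_level_zero_le_one (hQ : IsKNice k (Q : Set (ℤ × ℤ))) : #(level Q 0) ≤ 1 :=
  card_le_one.2 fun x hx y hy ↦ congr_arg Prod.fst <|
    hQ.eq_of_cross_eq_zero (mem_level.1 hx) (mem_level.1 hy) (by simp [cross])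

theorem mul_card_level_le (hQ : IsKNice k (Q : Set (ℤ × ℤ))) {d n : ℕ} (hd : 0 < d) (hdn : d ∣ n) :
    d * #(level Q n) ≤ d.totient * width (level Q n) + unitError d := by
  rcases (level Q n).eq_empty_or_nonempty with h_empty | h_nonempty
  · simp [h_empty]
  obtain ⟨a, ha, b, hb, h_subset, h_width⟩ := exists_width_eq h_nonempty
  have h_coprime : ∀ x ∈ level Q n, Int.gcd x d = 1 := fun x hx ↦ Nat.eq_one_of_dvd_one <|
    hQ.gcd_eq_one (mem_level.1 hx) ▸
      Int.gcd_dvd_gcd_of_dvd_right x (Int.natCast_dvd_natCast.2 hdn)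
  have h_le := mul_card_le_totient_mul_sub_add_unitError hd ha hb h_subset h_coprime
  rwa [← h_width, Int.toNat_natCast] at h_le

theorem mul_width_level_add_le (hQ : IsKNice k (Q : Set (ℤ × ℤ))) {m n : ℕ}
    (hm : (level Q m).Nonempty) (hn : (level Q n).Nonempty) :
    m * width (level Q n) + n * width (level Q m) ≤ 2 * k := by
  obtain ⟨a, ha, b, hb, -, h_width⟩ := exists_width_eq hm
  obtain ⟨a', ha', b', hb', -, h_width'⟩ := exists_width_eq hn
  rw [mem_level] at ha hb ha' hb'
  have h_le := (abs_le.1 (hQ.abs_cross_le hb ha')).2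
  have h_le' := (abs_le.1 (hQ.abs_cross_le hb' ha)).2
  simp only [cross] at h_le h_le'
  zify
  rw [h_width, h_width']
  linarith

theorem pairBounded_width_level (hQ : IsKNice k (Q : Set (ℤ × ℤ))) {h : ℕ}
    (h_top : (level Q h).Nonempty) : PairBounded (fun n ↦ width (level Q n)) h (2 * k) := by
  have h_width_le : ∀ m ∈ Icc 1 h, ∀ n, m * width (level Q n) ≤ 2 * k := fun m hm n ↦ by
    rcases (level Q n).eq_empty_or_nonempty with h_empty | h_nonempty
    · simp [h_empty, width]
    · calc m * width (level Q n) ≤ h * width (level Q n) :=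
            Nat.mul_le_mul_right _ (mem_Icc.1 hm).2
        _ ≤ 2 * k := le_of_add_le_left (hQ.mul_width_level_add_le h_top h_nonempty)
  intro m hm n hn
  rcases (level Q m).eq_empty_or_nonempty with h_empty | hm_nonempty
  · simpa [h_empty, width] using h_width_le m hm n
  rcases (level Q n).eq_empty_or_nonempty with h_empty | hn_nonempty
  · simpa [h_empty, width] using h_width_le n hn m
  exact hQ.mul_width_level_add_le hm_nonempty hn_nonempty

end IsKNice

namespace IsReducedKNice

variable {k h : ℕ} {Q : Finset (ℤ × ℤ)}

theorem card_le (hQ : IsReducedKNice k h Q) : #Q ≤ ∑ n ∈ Icc 1 h, #(level Q n) + 1 := by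
  rw [card_eq_sum_card_level hQ.yNonneg hQ.heightLe, sum_range_succ', sum_Icc_one_eq_sum_range]
  exact Nat.add_le_add_left hQ.isKNice.card_level_zero_le_one _

theorem pairBounded_width_level (hQ : IsReducedKNice k h Q) :
    PairBounded (fun n ↦ width (level Q n)) h (2 * k) := by
  obtain ⟨p, hp, hph⟩ := hQ.exists_snd_eq
  exact hQ.isKNice.pairBounded_width_level ⟨p.1, mem_level.2 (by rwa [← hph])⟩

end IsReducedKNice

end Levels

section SmallHeight

/-- The divisor of `n` used to count the level at height `n`. A larger divisor gives a better main
term and a worse error term; beyond `50` the primes `2`, `3` and `5` suffice. -/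
def levelModulus (n : ℕ) : ℕ := if n ≤ 50 then n else n.gcd 30

/-- The common denominator replacing rational weights by natural numbers. -/
def weightScale : ℕ := 10 ^ 9

/-- The density of the residues prime to `levelModulus n`, scaled by `weightScale` and rounded
up. -/
def levelWeight (n : ℕ) : ℕ := weightScale * (levelModulus n).totient / levelModulus n + 1

/-- The accumulated error of counting the levels `1, …, n`, scaled by `weightScale` and rounded up.
The recursion lets the kernel share the partial sums. -/
def totalError : ℕ → ℕ
  | 0 => 0
  | n + 1 =>
    totalError n + (weightScale * unitError (levelModulus (n + 1)) / levelModulus (n + 1) + 1)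

/-- The least `k ≥ 1892` with `3 * h ^ 2 ≤ 4 * k`. -/
def leastParameter (h : ℕ) : ℕ := max 1892 ((3 * h ^ 2 + 3) / 4)

/-- The dual bound for the weighted sum of the level widths at height `h`. -/
def widthDual (h : ℕ) : ℕ := greedyDual levelWeight (h - 1) 1 (levelWeight 1) (levelWeight h)

/-- The counting bound at height `h` grows with slope at most `1` in `k` and is below `k + 2` at the
least admissible `k`, hence at all admissible `k`. -/
def IsSmallCountHeight (h : ℕ) : Prop :=
  2 * widthDual h ≤ weightScale ∧
    2 * widthDual h * leastParameter h + totalError h < weightScale * (leastParameter h + 2)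

instance (h : ℕ) : Decidable (IsSmallCountHeight h) := inferInstanceAs (Decidable (_ ∧ _))

theorem isSmallCountHeight_of_mem_Icc : ∀ h ∈ Icc 4 180, IsSmallCountHeight h := by
  decide +kernel

theorem levelModulus_dvd (n : ℕ) : levelModulus n ∣ n := by
  rw [levelModulus]
  split_ifs
  · exact dvd_rfl
  · exact Nat.gcd_dvd_left n 30

theorem totalError_eq_sum (h : ℕ) : totalError h =
    ∑ n ∈ Icc 1 h, (weightScale * unitError (levelModulus n) / levelModulus n + 1) := by
  induction h with
  | zero => rfl
  | succ h ih => rw [totalError, ih, sum_Icc_succ_top (by omega)]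

theorem IsKNice.weightScale_mul_card_level_le {k : ℕ} {Q : Finset (ℤ × ℤ)}
    (hQ : IsKNice k (Q : Set (ℤ × ℤ))) {n : ℕ} (hn : 0 < n) :
    weightScale * #(level Q n) ≤ levelWeight n * width (level Q n) +
      (weightScale * unitError (levelModulus n) / levelModulus n + 1) := by
  have hd : 0 < levelModulus n := Nat.pos_of_dvd_of_pos (levelModulus_dvd n) hn
  refine Nat.le_of_mul_le_mul_right ?_ hd
  calc weightScale * #(level Q n) * levelModulus n
      = weightScale * (levelModulus n * #(level Q n)) := by ring
    _ ≤ weightScale * ((levelModulus n).totient * width (level Q n) +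
          unitError (levelModulus n)) :=
        Nat.mul_le_mul_left _ (hQ.mul_card_level_le hd (levelModulus_dvd n))
    _ = weightScale * (levelModulus n).totient * width (level Q n) +
          weightScale * unitError (levelModulus n) := by ring
    _ ≤ levelWeight n * levelModulus n * width (level Q n) +
          (weightScale * unitError (levelModulus n) / levelModulus n + 1) * levelModulus n :=
        add_le_add (Nat.mul_le_mul_right _ (le_div_add_one_mul _ hd)) (le_div_add_one_mul _ hd)
    _ = _ := by ring

theorem IsReducedKNice.card_le_of_isSmallCountHeight {k h : ℕ} {Q : Finset (ℤ × ℤ)}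
    (hQ : IsReducedKNice k h Q) (hk : 1892 ≤ k) (hh : 2 ≤ h) (h_small : IsSmallCountHeight h) :
    #Q ≤ k + 2 := by
  obtain ⟨h_slope, h_least⟩ := h_small
  obtain ⟨t, rfl⟩ : ∃ t, k = leastParameter h + t := by
    refine Nat.exists_eq_add_of_le (max_le hk ?_)
    have h_sq := hQ.three_mul_sq_le (by omega)
    omega
  have h_sum : weightScale * ∑ n ∈ Icc 1 h, #(level Q n) <
      weightScale * (leastParameter h + t + 2) :=
    calc weightScale * ∑ n ∈ Icc 1 h, #(level Q n)
        ≤ ∑ n ∈ Icc 1 h, levelWeight n * width (level Q n) + totalError h := by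
          rw [mul_sum, totalError_eq_sum, ← sum_add_distrib]
          exact sum_le_sum fun n hn ↦ hQ.isKNice.weightScale_mul_card_level_le (mem_Icc.1 hn).1
      _ ≤ 2 * (leastParameter h + t) * widthDual h + totalError h :=
          Nat.add_le_add_right (hQ.pairBounded_width_level.sum_mul_le_mul_greedyDual _ hh) _
      _ = 2 * widthDual h * leastParameter h + totalError h + 2 * widthDual h * t := by ring
      _ < weightScale * (leastParameter h + 2) + weightScale * t :=
          add_lt_add_of_lt_of_le h_least (Nat.mul_le_mul_right t h_slope)
      _ = weightScale * (leastParameter h + t + 2) := by ring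
  have h_card := hQ.card_le
  have h_lt := Nat.lt_of_mul_lt_mul_left h_sum
  omega

end SmallHeight

section LargeHeight

/-- The density of the residues prime to `n.gcd 210`, multiplied by `210`, the product
of the primes below `11`. -/
def unitDensity (n : ℕ) : ℕ := 210 / n.gcd 210 * (n.gcd 210).totient

/-- The error of counting a level through its residues modulo `n.gcd 210`, multiplied by `210`. -/
def densityError (n : ℕ) : ℕ := 210 / n.gcd 210 * unitError (n.gcd 210)

/-- `4608 / 35` is the mean of `unitDensity` over a period; `3406 / 35` bounds the excess of the
partial sums. -/
theorem sum_unitDensity_le (j : ℕ) : 35 * ∑ n ∈ Icc 1 j, unitDensity n ≤ 4608 * j + 3406 := by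
  refine sum_le_linear_of_periodic (p := 210) (by norm_num) (fun n ↦ ?_) (by decide +kernel)
    (by decide +kernel) j
  simp only [unitDensity, Nat.gcd_add_self_left]

theorem sum_densityError_le (j : ℕ) : 35 * ∑ n ∈ Icc 1 j, densityError n ≤ 9892 * j := by
  refine sum_le_linear_of_periodic (p := 210) (B := 0) (by norm_num) (fun n ↦ ?_)
    (by decide +kernel) (by decide +kernel) j
  simp only [densityError, Nat.gcd_add_self_left]

theorem IsKNice.mul_card_level_le_unitDensity {k : ℕ} {Q : Finset (ℤ × ℤ)}
    (hQ : IsKNice k (Q : Set (ℤ × ℤ))) (n : ℕ) :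
    210 * #(level Q n) ≤ unitDensity n * width (level Q n) + densityError n := by
  have h_dvd : n.gcd 210 ∣ 210 := Nat.gcd_dvd_right n 210
  calc 210 * #(level Q n) = 210 / n.gcd 210 * (n.gcd 210 * #(level Q n)) := by
        rw [← mul_assoc, Nat.div_mul_cancel h_dvd]
    _ ≤ 210 / n.gcd 210 * ((n.gcd 210).totient * width (level Q n) + unitError (n.gcd 210)) :=
        Nat.mul_le_mul_left _ <|
          hQ.mul_card_level_le (Nat.pos_of_dvd_of_pos h_dvd (by norm_num)) (Nat.gcd_dvd_left n 210)
    _ = _ := by rw [unitDensity, densityError]; ring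

theorem PairBounded.sum_unitDensity_mul_le {l : ℕ → ℕ} {h c : ℕ} (hl : PairBounded l h c)
    (hh : 1 ≤ h) : ∑ n ∈ Icc 1 h, (unitDensity n : ℝ) * l n ≤
      (4608 / 35 * (Real.pi / 4) + 3406 / 35 / h) * c := by
  refine hl.sum_mul_le hh (fun n ↦ Nat.cast_nonneg _) (by norm_num) fun j ↦ ?_
  have h_sum : 35 * ∑ n ∈ Icc 1 j, (unitDensity n : ℝ) ≤ 4608 * j + 3406 := by
    exact_mod_cast sum_unitDensity_le j
  linarith

theorem IsReducedKNice.card_le_of_lt {k h : ℕ} {Q : Finset (ℤ × ℤ)} (hQ : IsReducedKNice k h Q)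
    (hh : 180 < h) : #Q ≤ k + 1 := by
  have hh' : (181 : ℝ) ≤ h := by exact_mod_cast hh
  have h_sq : (3 : ℝ) * h ^ 2 ≤ 4 * k := by exact_mod_cast hQ.three_mul_sq_le (by omega)
  have h_height : (h : ℝ) ≤ 4 / 543 * k := by nlinarith
  have h_error : ∑ n ∈ Icc 1 h, (densityError n : ℝ) ≤ 9892 / 35 * h := by
    have h_sum : 35 * ∑ n ∈ Icc 1 h, (densityError n : ℝ) ≤ 9892 * h := by
      exact_mod_cast sum_densityError_le h
    linarith
  have h_main := hQ.pairBounded_width_level.sum_unitDensity_mul_le (by omega)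
  have h_sum : (210 * ∑ n ∈ Icc 1 h, #(level Q n) : ℝ) ≤ 210 * k :=
    calc (210 * ∑ n ∈ Icc 1 h, #(level Q n) : ℝ)
        ≤ ∑ n ∈ Icc 1 h, (unitDensity n : ℝ) * width (level Q n) +
            ∑ n ∈ Icc 1 h, (densityError n : ℝ) := by
          exact_mod_cast mul_sum _ _ (210 : ℕ) ▸ sum_add_distrib (M := ℕ) ▸
            sum_le_sum fun n _ ↦ hQ.isKNice.mul_card_level_le_unitDensity n
      _ ≤ (4608 / 35 * (3.1416 / 4) + 3406 / 35 / 181) * (2 * k) + 9892 / 35 * (4 / 543 * k) := by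
          push_cast at h_main ⊢
          refine add_le_add (h_main.trans ?_) (h_error.trans ?_)
          · gcongr
            exact Real.pi_lt_d4.le
          · gcongr
      _ ≤ 210 * k := by linarith [(Nat.cast_nonneg k : (0 : ℝ) ≤ k)]
  have h_card := hQ.card_le
  have h_le : ∑ n ∈ Icc 1 h, #(level Q n) ≤ k := by
    have := le_of_mul_le_mul_left h_sum (by norm_num)
    exact_mod_cast this
  omega

end LargeHeight

theorem IsReducedKNice.card_le_add_two {k h : ℕ} {Q : Finset (ℤ × ℤ)} (hQ : IsReducedKNice k h Q)
    (hk : 1892 ≤ k) (hh : 4 ≤ h) : #Q ≤ k + 2 := by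
  rcases le_or_gt h 180 with hh' | hh'
  · exact hQ.card_le_of_isSmallCountHeight hk (by omega)
      (isSmallCountHeight_of_mem_Icc h (mem_Icc.2 ⟨hh, hh'⟩))
  · exact (hQ.card_le_of_lt hh').trans (Nat.le_succ _)

theorem IsKNice.exists_heightLe_three {k : ℕ} {Q : Set (ℤ × ℤ)} (hQ : IsKNice k Q)
    (hk : 1892 ≤ k) : ∃ Q', IsKNice k Q' ∧ HeightLe Q' 3 ∧ Q.ncard ≤ Q'.ncard := by
  rcases Q.eq_empty_or_nonempty with rfl | h_nonempty
  · exact ⟨∅, hQ, fun p hp ↦ absurd hp (Set.notMem_empty p), le_rfl⟩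
  obtain ⟨h, Q', hQ', h_card⟩ := hQ.exists_isReducedKNice h_nonempty
  rcases le_or_gt h 3 with hh | hh
  · exact ⟨Q', hQ'.isKNice, fun p hp ↦ (hQ'.heightLe p hp).trans (by exact_mod_cast hh),
      by rw [Set.ncard_coe_finset, h_card]⟩
  · obtain ⟨R, hR, hR_le, hR_card⟩ := exists_isKNice_ncard_eq_add_two (k := k) (by omega)
    refine ⟨R, hR, fun p hp ↦ (hR_le p hp).trans (by norm_num), ?_⟩
    rw [hR_card, ← h_card]
    exact hQ'.card_le_add_two hk hh

theorem exists_isKNice_forall_ncard_le (k : ℕ) :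
    ∃ Q, IsKNice k Q ∧ ∀ Q', IsKNice k Q' → Q'.ncard ≤ Q.ncard := by
  have h_empty : IsKNice k ∅ := by simp [IsKNice]
  have h_bdd : BddAbove (Set.ncard '' {Q | IsKNice k Q}) :=
    ⟨(k + 1) ^ 2, Set.forall_mem_image.2 fun _ hQ ↦ hQ.ncard_le⟩
  obtain ⟨Q, hQ, h_eq⟩ := Nat.sSup_mem (Set.Nonempty.image _ ⟨∅, h_empty⟩) h_bdd
  exact ⟨Q, hQ, fun Q' hQ' ↦ h_eq ▸ le_csSup h_bdd ⟨Q', hQ', rfl⟩⟩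

theorem exists_max_kNice_height_le_three' (k : ℕ) (hk : 1892 ≤ k) :
    ∃ Q : Set (ℤ × ℤ), IsKNice k Q ∧ HeightLe Q 3 ∧
      ∀ Q' : Set (ℤ × ℤ), IsKNice k Q' → Q'.Finite ∧ Q'.ncard ≤ Q.ncard := by
  obtain ⟨M, hM, hM_max⟩ := exists_isKNice_forall_ncard_le k
  obtain ⟨Q, hQ, hQ_height, hQ_card⟩ := hM.exists_heightLe_three hk
  exact ⟨Q, hQ, hQ_height, fun Q' hQ' ↦ ⟨hQ'.finite, (hM_max Q' hQ').trans hQ_card⟩⟩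
end

section
/- For every integer k ≥ 3: every y-non-negative k-nice subset of ℤ² of height exactly 1 has at most k+2 elements, and the set {(1,0)} ∪ {(x,1) : 0 ≤ x ≤ k} is a y-non-negative k-nice set of height 1 with exactly k+2 elements. -/
/-!
Replacing `p` by `-p` where necessary turns the points of `Q` with `|n| = h` into points `(x, h)`,
and two of these have cross determinant `±h (x - x')`. Hence the `x` lie in an interval of length
`k / h`, and `Q` has at most `k / h + 1` points at level `h ≥ 1`. At level `0` coprimality leaves
only `(±1, 0)`, of which `Q` contains at most one. For height one this adds up to `1 + (k + 1)`.
-/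

theorem encard_le_of_forall_sub_le {S : Set ℤ} {d : ℕ} (hS : ∀ x ∈ S, ∀ y ∈ S, x - y ≤ d) :
    S.encard ≤ d + 1 := by
  rcases S.eq_empty_or_nonempty with rfl | ⟨b, hb⟩
  · simp
  obtain ⟨a, ha, hmin⟩ := Int.exists_least_of_bdd (P := (· ∈ S))
    ⟨b - d, fun x hx => by linarith [hS b hb x hx]⟩ ⟨b, hb⟩
  have hsub : S ⊆ Finset.Icc a (a + d) := fun x hx => by
    rw [Finset.mem_coe, Finset.mem_Icc]
    exact ⟨hmin x hx, by linarith [hS x hx a ha]⟩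
  calc S.encard ≤ (Finset.Icc a (a + d) : Set ℤ).encard := Set.encard_le_encard hsub
    _ = d + 1 := by
      rw [Set.encard_coe_eq_coe_finsetCard, Int.card_Icc]
      norm_cast
      omega

theorem eq_or_eq_neg_of_sign_mul_eq {p q : ℤ × ℤ} (hp : p.2 ≠ 0) (habs : |p.2| = |q.2|)
    (hsign : p.2.sign * p.1 = q.2.sign * q.1) : p = q ∨ p = -q := by
  rcases abs_eq_abs.mp habs with h | h
  · rw [h] at hp hsign
    exact Or.inl (Prod.ext (mul_left_cancel₀ (Int.sign_eq_zero_iff_zero.not.mpr hp) hsign) h)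
  · rw [h, neg_ne_zero] at hp
    rw [h, Int.sign_neg, neg_mul_comm] at hsign
    refine Or.inr (Prod.ext (neg_eq_iff_eq_neg.mp ?_) h)
    exact mul_left_cancel₀ (Int.sign_eq_zero_iff_zero.not.mpr hp) hsign

theorem abs_mul_abs_sign (n : ℤ) : |n| * |n.sign| = |n| := by
  rw [← abs_mul, mul_comm, Int.sign_mul_self_eq_abs, abs_abs]

theorem abs_det_eq_of_abs_snd_eq {p q : ℤ × ℤ} (habs : |p.2| = |q.2|) :
    |p.1 * q.2 - q.1 * p.2| = |q.2| * |p.2.sign * p.1 - q.2.sign * q.1| := by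
  rcases abs_eq_abs.mp habs with h | h
  · calc |p.1 * q.2 - q.1 * p.2| = |q.2| * |p.1 - q.1| := by
          rw [h, ← sub_mul, abs_mul, mul_comm]
      _ = |q.2| * |p.2.sign * p.1 - q.2.sign * q.1| := by
          rw [h, ← mul_sub, abs_mul, ← mul_assoc, abs_mul_abs_sign]
  · calc |p.1 * q.2 - q.1 * p.2| = |q.2| * |p.1 + q.1| := by
          rw [h, mul_neg, sub_neg_eq_add, ← add_mul, abs_mul, mul_comm]
      _ = |q.2| * |p.2.sign * p.1 - q.2.sign * q.1| := by
          rw [h, Int.sign_neg, neg_mul, ← neg_add', ← mul_add, abs_neg, abs_mul, ← mul_assoc,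
            abs_mul_abs_sign]

namespace IsKNice

variable {k h : ℕ} {Q : Set (ℤ × ℤ)} {p q : ℤ × ℤ}

theorem ne_neg (hQ : IsKNice k Q) (hp : p ∈ Q) (hq : q ∈ Q) : p ≠ -q :=
  fun h => hQ.2.1 q hq (h ▸ hp)

theorem sign_mul_sub_sign_mul_le (hQ : IsKNice k Q) (hh : 0 < h) (hp : p ∈ Q) (hq : q ∈ Q)
    (hph : |p.2| = h) (hqh : |q.2| = h) :
    p.2.sign * p.1 - q.2.sign * q.1 ≤ (k / h : ℕ) := by
  have hdet := hQ.2.2 p hp q hq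
  rw [abs_det_eq_of_abs_snd_eq (hph.trans hqh.symm), hqh] at hdet
  rw [Int.natCast_div, Int.le_ediv_iff_mul_le (by exact_mod_cast hh), mul_comm]
  exact (mul_le_mul_of_nonneg_left (le_abs_self _) h.cast_nonneg).trans hdet

theorem encard_abs_snd_eq_le (hQ : IsKNice k Q) (hh : 0 < h) :
    {p ∈ Q | |p.2| = h}.encard ≤ (k / h : ℕ) + 1 := by
  have hinj : Set.InjOn (fun p : ℤ × ℤ => p.2.sign * p.1) {p ∈ Q | |p.2| = h} := by
    rintro p ⟨hp, hph⟩ q ⟨hq, hqh⟩ hpq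
    have hp0 : p.2 ≠ 0 := by
      rw [← abs_pos, hph]
      exact_mod_cast hh
    exact (eq_or_eq_neg_of_sign_mul_eq hp0 (hph.trans hqh.symm) hpq).resolve_right
      (hQ.ne_neg hp hq)
  rw [← hinj.encard_image]
  apply encard_le_of_forall_sub_le
  rintro _ ⟨p, ⟨hp, hph⟩, rfl⟩ _ ⟨q, ⟨hq, hqh⟩, rfl⟩
  exact hQ.sign_mul_sub_sign_mul_le hh hp hq hph hqh

theorem abs_fst_eq_one (hQ : IsKNice k Q) (hp : p ∈ Q) (hp0 : p.2 = 0) : |p.1| = 1 := by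
  have hgcd := (hQ.1 p hp).2
  rw [hp0, Int.gcd_zero_right] at hgcd
  rw [Int.abs_eq_natAbs, hgcd, Nat.cast_one]

theorem encard_snd_eq_zero_le_one (hQ : IsKNice k Q) : {p ∈ Q | p.2 = 0}.encard ≤ 1 := by
  rw [Set.encard_le_one_iff]
  rintro p q ⟨hp, hp0⟩ ⟨hq, hq0⟩
  rcases abs_eq_abs.mp ((hQ.abs_fst_eq_one hp hp0).trans (hQ.abs_fst_eq_one hq hq0).symm)
    with h | h
  · exact Prod.ext h (hp0.trans hq0.symm)
  · exact absurd (Prod.ext h (by simp [hp0, hq0])) (hQ.ne_neg hp hq)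

theorem encard_le_of_heightLe_one (hQ : IsKNice k Q) (hle : HeightLe Q 1) :
    Q.encard ≤ (k + 2 : ℕ) := by
  have hsub : Q ⊆ {p ∈ Q | p.2 = 0} ∪ {p ∈ Q | |p.2| = (1 : ℕ)} := fun p hp => by
    have hp1 : |p.2| ≤ 1 := hle p hp
    rcases Int.abs_le_one_iff.mp hp1 with h | h | h <;> simp [hp, h]
  calc Q.encard
      ≤ {p ∈ Q | p.2 = 0}.encard + {p ∈ Q | |p.2| = (1 : ℕ)}.encard :=
        (Set.encard_le_encard hsub).trans (Set.encard_union_le _ _)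
    _ ≤ 1 + ((k / 1 : ℕ) + 1) :=
        add_le_add hQ.encard_snd_eq_zero_le_one (hQ.encard_abs_snd_eq_le one_pos)
    _ = (k + 2 : ℕ) := by
      rw [Nat.div_one]
      norm_cast
      omega

end IsKNice

/-- The extremal configuration for height one: for `k ≥ 1` it is a `k`-nice set of the largest
possible size. -/
def extremalSet (k : ℕ) : Set (ℤ × ℤ) :=
  {((1 : ℤ), (0 : ℤ))} ∪ {p : ℤ × ℤ | 0 ≤ p.1 ∧ p.1 ≤ (k : ℤ) ∧ p.2 = 1}

namespace extremalSet

variable (k : ℕ)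

theorem yNonneg : YNonneg (extremalSet k) := by
  rintro p (rfl | ⟨-, -, h⟩) <;> simp [*]

theorem heightEq_one : HeightEq (extremalSet k) 1 := by
  refine ⟨?_, (0, 1), Or.inr ⟨le_rfl, k.cast_nonneg, rfl⟩, by simp⟩
  rintro p (rfl | ⟨-, -, h⟩) <;> simp [*]

theorem isKNice {k : ℕ} (hk : 1 ≤ k) : IsKNice k (extremalSet k) := by
  refine ⟨?_, ?_, ?_⟩
  · rintro ⟨x, y⟩ (⟨rfl, rfl⟩ | ⟨-, -, rfl : y = 1⟩) <;> simp
  · rintro ⟨x, y⟩ (⟨rfl, rfl⟩ | ⟨-, -, rfl : y = 1⟩) <;> simp [extremalSet]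
  · rintro ⟨x, y⟩ (⟨rfl, rfl⟩ | ⟨hx, hxk, rfl : y = 1⟩)
      ⟨x', y'⟩ (⟨rfl, rfl⟩ | ⟨hx', hxk', rfl : y' = 1⟩)
    all_goals
      simp only at *
      rw [abs_le]
      constructor <;> linarith

theorem eq_insert_image :
    extremalSet k = insert (1, 0) ((fun x : ℤ => (x, (1 : ℤ))) '' Finset.Icc 0 (k : ℤ)) := by
  ext ⟨x, y⟩
  simp [extremalSet, and_assoc, eq_comm]

theorem ncard_eq : (extremalSet k).ncard = k + 2 := by
  rw [eq_insert_image, Set.ncard_insert_of_notMem (by simp),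
    Set.ncard_image_of_injective _ (Prod.mk_left_injective 1), Set.ncard_coe_finset, Int.card_Icc]
  omega

end extremalSet

theorem kNice_height_one_general (k : ℕ) :
    (∀ Q : Set (ℤ × ℤ), IsKNice k Q → HeightLe Q 1 → Q.Finite ∧ Q.ncard ≤ k + 2) ∧
    (1 ≤ k → IsKNice k (extremalSet k) ∧ YNonneg (extremalSet k) ∧ HeightEq (extremalSet k) 1 ∧
      (extremalSet k).ncard = k + 2) :=
  ⟨fun _ hQ hle =>
      Set.encard_le_coe_iff_finite_ncard_le.mp (hQ.encard_le_of_heightLe_one hle),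
    fun hk => ⟨extremalSet.isKNice hk, extremalSet.yNonneg k, extremalSet.heightEq_one k,
      extremalSet.ncard_eq k⟩⟩

theorem kNice_height_one (k : ℕ) (hk : 3 ≤ k) :
    (∀ Q : Set (ℤ × ℤ), IsKNice k Q → YNonneg Q → HeightEq Q 1 →
      Q.Finite ∧ Q.ncard ≤ k + 2) ∧
    (IsKNice k ({((1 : ℤ), (0 : ℤ))} ∪ {p : ℤ × ℤ | 0 ≤ p.1 ∧ p.1 ≤ (k : ℤ) ∧ p.2 = 1}) ∧
     YNonneg ({((1 : ℤ), (0 : ℤ))} ∪ {p : ℤ × ℤ | 0 ≤ p.1 ∧ p.1 ≤ (k : ℤ) ∧ p.2 = 1}) ∧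
     HeightEq ({((1 : ℤ), (0 : ℤ))} ∪ {p : ℤ × ℤ | 0 ≤ p.1 ∧ p.1 ≤ (k : ℤ) ∧ p.2 = 1}) 1 ∧
     ({((1 : ℤ), (0 : ℤ))} ∪ {p : ℤ × ℤ | 0 ≤ p.1 ∧ p.1 ≤ (k : ℤ) ∧ p.2 = 1}).ncard = k + 2) :=
  ⟨fun Q hQ _ hheight => (kNice_height_one_general k).1 Q hQ hheight.1,
    (kNice_height_one_general k).2 (by omega)⟩
end

section
/- For every integer k ≥ 3: every y-non-negative k-nice subset of ℤ² of height exactly 3 has at most k+4 elements; if a y-non-negative k-nice set of height 3 has exactly k+4 elements, then k ≡ 2 (mod 6); conversely, if k ≡ 2 (mod 6), then there exists a y-non-negative k-nice set of height 3 with exactly k+4 elements; and if k ≡ 0 (mod 6) or k ≡ 4 (mod 6), then every y-non-negative k-nice set of height exactly 3 has at most k+2 elements. -/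
/-!
Let `a ≤ b` be the extreme abscissas in row `3` of `Q`. Comparing with `(a, 3)` and `(b, 3)`
confines `Q` to the coprime points of a trapezoid of height `3`, except for at most one point in
row `0`. Counting the coprime points row by row gives `6 |Q| ≤ 6 (k + 4) - loss`, where `loss`
depends only on `a` and `b` modulo `3` and on `k` modulo `6`, so the bounds reduce to a finite check
of residues. For even `k ≤ 4 (b - a + 1)` the trapezoid together with `(1, 0)` is itself `k`-nice,
and if `k ≡ 2 [MOD 6]` the choice `a = 1`, `b = 3 ⌊k / 12⌋ + 2` has `loss = 0`.
-/

lemma gcd_natCast_eq_one_iff_not_dvd {p : ℕ} (hp : p.Prime) (m : ℤ) :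
    Int.gcd m p = 1 ↔ ¬ (p : ℤ) ∣ m := by
  rw [Int.gcd_comm, ← Int.isCoprime_iff_gcd_eq_one,
    (Nat.prime_iff_prime_int.mp hp).coprime_iff_not_dvd]

lemma card_Ioc_filter_not_dvd {r l u : ℤ} (hr : 0 < r) (hlu : l ≤ u) :
    (((Finset.Ioc l u).filter (¬ r ∣ ·)).card : ℤ) = (u - u / r) - (l - l / r) := by
  have card_dvd : (((Finset.Ioc l u).filter (r ∣ ·)).card : ℤ) = u / r - l / r := by
    have floor_div (x : ℤ) : ⌊(x : ℚ) / r⌋ = x / r := by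
      lift r to ℕ using hr.le
      exact Rat.floor_intCast_div_natCast x r
    rw [Int.Ioc_filter_dvd_card l u hr, floor_div, floor_div,
      max_eq_left (sub_nonneg.mpr (Int.ediv_le_ediv hr hlu))]
  have card_add := Finset.card_filter_add_card_filter_not (s := Finset.Ioc l u) (r ∣ ·)
  rw [Int.card_Ioc] at card_add
  omega

/-- The coprime points `(m, n)` with `0 < n ≤ h` whose determinants with `(a, h)` and `(b, h)` are
bounded by `k`, where row `h` is cut down to `[a, b]`. For `a ≤ b` the two inequalities shown imply
the other two determinant bounds. A `k`-nice set whose row `h` spans `[a, b]` lies in this envelope,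
up to row `0`. -/
def envelope (k h : ℕ) (a b : ℤ) : Set (ℤ × ℤ) :=
  {p | Int.gcd p.1 p.2 = 1 ∧ 0 < p.2 ∧ p.2 ≤ h ∧ b * p.2 - k ≤ p.1 * h ∧ p.1 * h ≤ k + a * p.2 ∧
    (p.2 = h → a ≤ p.1 ∧ p.1 ≤ b)}

section Envelope

variable {k h : ℕ} {a b : ℤ}

lemma left_mem_envelope (hh : 0 < h) (hgcd : Int.gcd a h = 1) (hab : a ≤ b)
    (hk : (b - a) * h ≤ k) : (a, (h : ℤ)) ∈ envelope k h a b :=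
  ⟨hgcd, Int.natCast_pos.mpr hh, le_rfl, by linarith, by linarith [k.cast_nonneg (α := ℤ)],
    fun _ => ⟨le_rfl, hab⟩⟩

lemma yNonneg_insert_envelope (e : ℤ) : YNonneg (insert (e, 0) (envelope k h a b)) := by
  rintro p (rfl | ⟨-, hpos, -⟩)
  exacts [le_rfl, hpos.le]

lemma heightEq_insert_envelope (hh : 0 < h) (hgcd : Int.gcd a h = 1) (hab : a ≤ b)
    (hk : (b - a) * h ≤ k) (e : ℤ) : HeightEq (insert (e, 0) (envelope k h a b)) h := by
  refine ⟨?_, _, Or.inr (left_mem_envelope hh hgcd hab hk), abs_of_nonneg h.cast_nonneg⟩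
  rintro p (rfl | ⟨-, hpos, hle, -⟩)
  · simp
  · rwa [abs_of_pos hpos]

lemma det_le_of_mem_envelope_of_snd_eq {p q : ℤ × ℤ} (hp : p ∈ envelope k h a b)
    (hq : q ∈ envelope k h a b) (htop : p.2 = h ∨ q.2 = h) : p.1 * q.2 - q.1 * p.2 ≤ k := by
  obtain ⟨-, hp_pos, -, -, hp_upp, hp_top⟩ := hp
  obtain ⟨-, hq_pos, -, hq_low, -, hq_top⟩ := hq
  rcases htop with htop | htop
  · rw [htop]
    linarith [mul_le_mul_of_nonneg_right (hp_top htop).2 hq_pos.le]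
  · rw [htop]
    linarith [mul_le_mul_of_nonneg_right (hq_top htop).1 hp_pos.le]

end Envelope

namespace IsKNice

variable {k h : ℕ} {Q : Set (ℤ × ℤ)}

lemma gcd_eq_one_s16 (hQ : IsKNice k Q) {m n : ℤ} (hm : (m, n) ∈ Q) : Int.gcd m n = 1 :=
  (hQ.1 _ hm).2

lemma mul_sub_mul_le (hQ : IsKNice k Q) {m n m' n' : ℤ} (hm : (m, n) ∈ Q) (hm' : (m', n') ∈ Q) :
    m * n' - m' * n ≤ k :=
  (le_abs_self _).trans (hQ.2.2 _ hm _ hm')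

lemma subsingleton_row_zero (hQ : IsKNice k Q) : {m : ℤ | (m, (0 : ℤ)) ∈ Q}.Subsingleton := by
  intro m hm m' hm'
  have natAbs_eq : m.natAbs = m'.natAbs := by
    rw [← Int.gcd_zero_right m, ← Int.gcd_zero_right m', hQ.gcd_eq_one_s16 hm, hQ.gcd_eq_one_s16 hm']
  refine (Int.natAbs_eq_natAbs_iff.mp natAbs_eq).resolve_right ?_
  rintro rfl
  exact hQ.2.1 _ hm' (by simpa using hm)

lemma row_subset_Icc (hQ : IsKNice k Q) (hh : 0 < h) {c : ℤ} (hc : (c, (h : ℤ)) ∈ Q) :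
    {m : ℤ | (m, (h : ℤ)) ∈ Q} ⊆ Set.Icc (c - k) (c + k) := by
  intro m hm
  have one_le_h : (1 : ℤ) ≤ h := by exact_mod_cast hh
  have upper := hQ.mul_sub_mul_le hm hc
  have lower := hQ.mul_sub_mul_le hc hm
  constructor <;> nlinarith [one_le_h]

lemma subset_insert_envelope (hQ : IsKNice k Q) (hY : YNonneg Q) (hle : HeightLe Q h) {a b e : ℤ}
    (ha : IsLeast {m : ℤ | (m, (h : ℤ)) ∈ Q} a) (hb : IsGreatest {m : ℤ | (m, (h : ℤ)) ∈ Q} b)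
    (he : ∀ m : ℤ, (m, (0 : ℤ)) ∈ Q → m = e) : Q ⊆ insert (e, 0) (envelope k h a b) := by
  rintro ⟨m, n⟩ hm
  have hn : 0 ≤ n := hY _ hm
  obtain rfl | hpos := hn.eq_or_lt
  · exact Or.inl (by rw [he m hm])
  · refine Or.inr ⟨hQ.gcd_eq_one_s16 hm, hpos, (le_abs_self n).trans (hle _ hm), ?_, ?_, ?_⟩
    · linarith [hQ.mul_sub_mul_le hb.1 hm]
    · linarith [hQ.mul_sub_mul_le hm ha.1]
    · rintro rfl
      exact ⟨ha.2 hm, hb.2 hm⟩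

lemma exists_subset_insert_envelope (hQ : IsKNice k Q) (hY : YNonneg Q) (hH : HeightEq Q h)
    (hh : 0 < h) : ∃ a b e : ℤ, Int.gcd a h = 1 ∧ Int.gcd b h = 1 ∧ a ≤ b ∧ (b - a) * h ≤ k ∧
      Q ⊆ insert (e, 0) (envelope k h a b) := by
  obtain ⟨hle, ⟨c, n⟩, hc, hn⟩ := hH
  obtain rfl : n = h := (abs_of_nonneg (hY _ hc)).symm.trans hn
  have hrow := hQ.row_subset_Icc hh hc
  obtain ⟨a, ha⟩ := (bddBelow_Icc.mono hrow).exists_isLeast_of_nonempty ⟨c, hc⟩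
  obtain ⟨b, hb⟩ := (bddAbove_Icc.mono hrow).exists_isGreatest_of_nonempty ⟨c, hc⟩
  obtain ⟨e, he⟩ : ∃ e : ℤ, ∀ m : ℤ, (m, (0 : ℤ)) ∈ Q → m = e := by
    by_cases hzero : ∃ e : ℤ, (e, (0 : ℤ)) ∈ Q
    · exact hzero.imp fun e he m hm => hQ.subsingleton_row_zero hm he
    · exact ⟨0, fun m hm => absurd ⟨m, hm⟩ hzero⟩
  refine ⟨a, b, e, hQ.gcd_eq_one_s16 ha.1, hQ.gcd_eq_one_s16 hb.1, ha.2 hb.1, ?_,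
    hQ.subset_insert_envelope hY hle ha hb he⟩
  linarith [hQ.mul_sub_mul_le hb.1 ha.1]

end IsKNice

/-- Six times the amount by which `k + 3` exceeds the number of points of `envelope k 3 a b`, for
`a ≤ b` not divisible by `3` with `3 * (b - a) ≤ k`. The lengths of the rows contribute `k + 3` in
total; the first four remainders come from rounding the ends of the rows `1` and `2`, and
`b % 3 - a % 3` from skipping the multiples of `3` in row `3`. -/
def roundingLoss (k a b : ℤ) : ℤ :=
  2 * ((k + a) % 3 + (k - b) % 3) + ((k + 2 * a + 3) % 6 + (k - 2 * b + 3) % 6) -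
    2 * (b % 3 - a % 3)

lemma neg_six_lt_roundingLoss (k a b : ℤ) : -6 < roundingLoss k a b := by
  unfold roundingLoss
  omega

section RoundingLoss

variable {a b : ℤ}

lemma emod_six_eq_two_of_roundingLoss_nonpos {k : ℤ} (ha : ¬ 3 ∣ a) (hb : ¬ 3 ∣ b)
    (hloss : roundingLoss k a b ≤ 0) : k % 6 = 2 := by
  have ha' : a % 3 = 1 ∨ a % 3 = 2 := by omega
  have hb' : b % 3 = 1 ∨ b % 3 = 2 := by omega
  unfold roundingLoss at hloss
  rcases ha' with ha' | ha' <;> rcases hb' with hb' | hb' <;> omega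

lemma six_lt_roundingLoss {k : ℤ} (ha : ¬ 3 ∣ a) (hb : ¬ 3 ∣ b) (hk : k % 6 = 0 ∨ k % 6 = 4) :
    6 < roundingLoss k a b := by
  have ha' : a % 3 = 1 ∨ a % 3 = 2 := by omega
  have hb' : b % 3 = 1 ∨ b % 3 = 2 := by omega
  unfold roundingLoss
  rcases hk with hk | hk <;> rcases ha' with ha' | ha' <;> rcases hb' with hb' | hb' <;> omega

end RoundingLoss

section HeightThree

variable {k : ℕ} {a b : ℤ}

lemma envelope_three_eq (hk : (b - a) * 3 ≤ k) :
    envelope k 3 a b =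
      ((Finset.Ioc ((b - k - 1) / 3) ((k + a) / 3) ×ˢ {1} ∪
        ((Finset.Ioc ((2 * b - k - 1) / 3) ((k + 2 * a) / 3)).filter (¬ 2 ∣ ·) ×ˢ {2} ∪
          (Finset.Ioc (a - 1) b).filter (¬ 3 ∣ ·) ×ˢ {3}) : Finset (ℤ × ℤ)) : Set (ℤ × ℤ)) := by
  ext ⟨m, n⟩
  have gcd_two := gcd_natCast_eq_one_iff_not_dvd Nat.prime_two m
  have gcd_three := gcd_natCast_eq_one_iff_not_dvd Nat.prime_three m
  push_cast at gcd_two gcd_three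
  simp only [envelope, Set.mem_ofPred_eq, Finset.mem_coe, Finset.mem_union, Finset.mem_product,
    Finset.mem_filter, Finset.mem_Ioc, Finset.mem_singleton, Nat.cast_ofNat]
  constructor
  · rintro ⟨hgcd, hpos, hle, hlow, hupp, htop⟩
    obtain rfl | rfl | rfl : n = 1 ∨ n = 2 ∨ n = 3 := by omega
    · omega
    · have hodd := gcd_two.mp hgcd
      omega
    · have hndvd := gcd_three.mp hgcd
      omega
  · rintro (⟨hm, rfl⟩ | ⟨⟨hm, hodd⟩, rfl⟩ | ⟨⟨hm, hndvd⟩, rfl⟩)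
    · refine ⟨Int.gcd_one, ?_⟩
      omega
    · refine ⟨gcd_two.mpr hodd, ?_⟩
      omega
    · refine ⟨gcd_three.mpr hndvd, ?_⟩
      omega

lemma finite_envelope_three (hk : (b - a) * 3 ≤ k) : (envelope k 3 a b).Finite := by
  rw [envelope_three_eq hk]
  exact Finset.finite_toSet _

lemma ncard_envelope_three (hk : (b - a) * 3 ≤ k) :
    (envelope k 3 a b).ncard =
      (Finset.Ioc ((b - k - 1) / 3) ((k + a) / 3)).card +
        (((Finset.Ioc ((2 * b - k - 1) / 3) ((k + 2 * a) / 3)).filter (¬ 2 ∣ ·)).card +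
          ((Finset.Ioc (a - 1) b).filter (¬ 3 ∣ ·)).card) := by
  rw [envelope_three_eq hk, Set.ncard_coe_finset, Finset.card_union_of_disjoint,
    Finset.card_union_of_disjoint]
  · simp only [Finset.card_product, Finset.card_singleton, mul_one]
  all_goals
    simp only [Finset.disjoint_union_right, Finset.disjoint_product, Finset.disjoint_singleton]
    norm_num

lemma six_mul_ncard_envelope_three (ha : ¬ 3 ∣ a) (hb : ¬ 3 ∣ b) (hab : a ≤ b)
    (hk : (b - a) * 3 ≤ k) :
    6 * ((envelope k 3 a b).ncard : ℤ) = 6 * (k + 3) - roundingLoss k a b := by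
  have row_one : 3 * ((Finset.Ioc ((b - k - 1) / 3) ((k + a) / 3)).card : ℤ) =
      2 * k - (b - a) + 3 - ((k + a) % 3 + (k - b) % 3) := by
    rw [Int.card_Ioc]
    omega
  have row_two :
      6 * (((Finset.Ioc ((2 * b - k - 1) / 3) ((k + 2 * a) / 3)).filter (¬ 2 ∣ ·)).card : ℤ) =
        2 * (k - (b - a)) + 6 - ((k + 2 * a + 3) % 6 + (k - 2 * b + 3) % 6) := by
    have upper_odd : (k + 2 * a) / 3 - (k + 2 * a) / 3 / 2 = (k + 2 * a + 3) / 6 := by omega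
    have lower_odd :
        (2 * b - k - 1) / 3 - (2 * b - k - 1) / 3 / 2 = -((k - 2 * b + 3) / 6) := by omega
    rw [card_Ioc_filter_not_dvd two_pos (by omega), upper_odd, lower_odd]
    omega
  have row_three : 3 * (((Finset.Ioc (a - 1) b).filter (¬ 3 ∣ ·)).card : ℤ) =
      2 * (b - a) + 3 + (b % 3 - a % 3) := by
    rw [card_Ioc_filter_not_dvd three_pos (by omega)]
    omega
  rw [ncard_envelope_three hk, roundingLoss]
  push_cast
  linarith

lemma det_le_of_mem_envelope_three (heven : 2 ∣ k) (hab : a ≤ b) (hwidth : k ≤ 4 * (b - a + 1))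
    {p q : ℤ × ℤ} (hp : p ∈ envelope k 3 a b) (hq : q ∈ envelope k 3 a b) :
    p.1 * q.2 - q.1 * p.2 ≤ k := by
  by_cases htop : p.2 = 3 ∨ q.2 = 3
  · exact det_le_of_mem_envelope_of_snd_eq hp hq htop
  obtain ⟨m, i⟩ := p
  obtain ⟨n, j⟩ := q
  obtain ⟨hm_gcd, hi_pos, hi_le, -, hm_upp, -⟩ := hp
  obtain ⟨hn_gcd, hj_pos, hj_le, hn_low, -, -⟩ := hq
  simp only [Nat.cast_ofNat] at htop hi_pos hi_le hm_upp hj_pos hj_le hn_low ⊢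
  obtain rfl | rfl : i = 1 ∨ i = 2 := by omega
  all_goals obtain rfl | rfl : j = 1 ∨ j = 2 := by omega
  · omega
  · omega
  · omega
  · have hm_odd := (gcd_natCast_eq_one_iff_not_dvd Nat.prime_two m).mp hm_gcd
    have hn_odd := (gcd_natCast_eq_one_iff_not_dvd Nat.prime_two n).mp hn_gcd
    have hm_upp' : m * 3 ≤ k + a * 2 - 1 := by omega
    have hn_low' : b * 2 - k + 1 ≤ n * 3 := by omega
    omega

lemma isKNice_insert_envelope_three (hk : 3 ≤ k) (heven : 2 ∣ k) (hab : a ≤ b)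
    (hwidth : k ≤ 4 * (b - a + 1)) :
    IsKNice k (insert (1, 0) (envelope k 3 a b)) := by
  have det_le : ∀ p ∈ insert (1, 0) (envelope k 3 a b), ∀ q ∈ insert (1, 0) (envelope k 3 a b),
      p.1 * q.2 - q.1 * p.2 ≤ k := by
    rintro p (rfl | hp) q (rfl | hq)
    · simp
    · have hq_le : q.2 ≤ 3 := hq.2.2.1
      simp only
      omega
    · have hp_pos := hp.2.1
      simp only
      omega
    · exact det_le_of_mem_envelope_three heven hab hwidth hp hq
  refine ⟨?_, ?_, fun p hp q hq => abs_sub_le_iff.mpr ⟨det_le p hp q hq, det_le q hq p hp⟩⟩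
  · rintro p (rfl | ⟨hgcd, hpos, -⟩)
    · simp
    · exact ⟨fun h => hpos.ne' (congrArg Prod.snd h), hgcd⟩
  · rintro p (rfl | ⟨-, hpos, -⟩) (hneg | ⟨-, hneg, -⟩)
    · simp at hneg
    · simp at hneg
    · exact hpos.ne' (neg_eq_zero.mp (congrArg Prod.snd hneg))
    · exact hpos.not_gt (neg_pos.mp hneg)

end HeightThree

namespace IsKNice

variable {k : ℕ} {Q : Set (ℤ × ℤ)}

lemma finite_and_exists_ncard_le (hQ : IsKNice k Q) (hY : YNonneg Q) (hH : HeightEq Q 3) :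
    Q.Finite ∧ ∃ a b : ℤ, ¬ 3 ∣ a ∧ ¬ 3 ∣ b ∧
      6 * (Q.ncard : ℤ) ≤ 6 * (k + 4) - roundingLoss k a b := by
  obtain ⟨a, b, e, hgcda, hgcdb, hab, hk, hsub⟩ :=
    hQ.exists_subset_insert_envelope hY hH three_pos
  have ha := (gcd_natCast_eq_one_iff_not_dvd Nat.prime_three a).mp hgcda
  have hb := (gcd_natCast_eq_one_iff_not_dvd Nat.prime_three b).mp hgcdb
  have hfin := (finite_envelope_three hk).insert (e, 0)
  have hcard := (Set.ncard_le_ncard hsub hfin).trans (Set.ncard_insert_le _ _)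
  have hcount := six_mul_ncard_envelope_three ha hb hab hk
  exact ⟨hfin.subset hsub, a, b, ha, hb, by omega⟩

lemma finite_of_height_three (hQ : IsKNice k Q) (hY : YNonneg Q) (hH : HeightEq Q 3) : Q.Finite :=
  (hQ.finite_and_exists_ncard_le hY hH).1

lemma ncard_le_add_four_of_height_three (hQ : IsKNice k Q) (hY : YNonneg Q) (hH : HeightEq Q 3) :
    Q.ncard ≤ k + 4 := by
  obtain ⟨-, a, b, -, -, hle⟩ := hQ.finite_and_exists_ncard_le hY hH
  have hloss := neg_six_lt_roundingLoss k a b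
  omega

lemma mod_six_eq_two_of_ncard_eq_add_four_of_height_three (hQ : IsKNice k Q) (hY : YNonneg Q)
    (hH : HeightEq Q 3) (hcard : Q.ncard = k + 4) : k % 6 = 2 := by
  obtain ⟨-, a, b, ha, hb, hle⟩ := hQ.finite_and_exists_ncard_le hY hH
  have hmod := emod_six_eq_two_of_roundingLoss_nonpos (k := k) ha hb (by omega)
  omega

lemma ncard_le_add_two_of_height_three (hQ : IsKNice k Q) (hY : YNonneg Q) (hH : HeightEq Q 3)
    (hmod : k % 6 = 0 ∨ k % 6 = 4) : Q.ncard ≤ k + 2 := by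
  obtain ⟨-, a, b, ha, hb, hle⟩ := hQ.finite_and_exists_ncard_le hY hH
  have hloss := six_lt_roundingLoss (k := k) ha hb (by omega)
  omega

end IsKNice

lemma exists_isKNice_height_three_ncard_eq {k : ℕ} (hk : 3 ≤ k) (hmod : k % 6 = 2) :
    ∃ Q : Set (ℤ × ℤ), IsKNice k Q ∧ YNonneg Q ∧ HeightEq Q 3 ∧ Q.Finite ∧ Q.ncard = k + 4 := by
  obtain ⟨c, hc⟩ : ∃ c : ℕ, c = k / 12 := ⟨_, rfl⟩
  have hab : (1 : ℤ) ≤ 3 * c + 2 := by omega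
  have hupp : (3 * c + 2 - 1 : ℤ) * 3 ≤ k := by omega
  have hfin := finite_envelope_three hupp
  refine ⟨insert (1, 0) (envelope k 3 1 (3 * c + 2)),
    isKNice_insert_envelope_three hk (by omega) hab (by omega), yNonneg_insert_envelope 1,
    heightEq_insert_envelope three_pos Int.one_gcd hab hupp 1, hfin.insert _, ?_⟩
  have hcount := six_mul_ncard_envelope_three (by omega) (by omega) hab hupp
  rw [roundingLoss] at hcount
  rw [Set.ncard_insert_of_notMem (fun h => lt_irrefl _ h.2.1) hfin]
  omega

theorem kNice_height_three (k : ℕ) (hk : 3 ≤ k) :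
    (∀ Q : Set (ℤ × ℤ), IsKNice k Q → YNonneg Q → HeightEq Q 3 →
      Q.Finite ∧ Q.ncard ≤ k + 4) ∧
    (∀ Q : Set (ℤ × ℤ), IsKNice k Q → YNonneg Q → HeightEq Q 3 →
      Q.ncard = k + 4 → k % 6 = 2) ∧
    (k % 6 = 2 → ∃ Q : Set (ℤ × ℤ), IsKNice k Q ∧ YNonneg Q ∧ HeightEq Q 3 ∧
      Q.Finite ∧ Q.ncard = k + 4) ∧
    ((k % 6 = 0 ∨ k % 6 = 4) → ∀ Q : Set (ℤ × ℤ), IsKNice k Q → YNonneg Q →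
      HeightEq Q 3 → Q.Finite ∧ Q.ncard ≤ k + 2) := by
  refine ⟨fun Q hQ hY hH => ⟨hQ.finite_of_height_three hY hH, ?_⟩, fun Q hQ hY hH hcard => ?_,
    exists_isKNice_height_three_ncard_eq hk,
    fun hmod Q hQ hY hH => ⟨hQ.finite_of_height_three hY hH, ?_⟩⟩
  · exact hQ.ncard_le_add_four_of_height_three hY hH
  · exact hQ.mod_six_eq_two_of_ncard_eq_add_four_of_height_three hY hH hcard
  · exact hQ.ncard_le_add_two_of_height_three hY hH hmod
end

section
/- The maximum size of a 1-nice subset of ℤ² is 3, and the maximum size of a 2-nice subset of ℤ² is 4. That is, every 1-nice set has at most 3 elements and some 1-nice set has exactly 3 elements, and every 2-nice set has at most 4 elements and some 2-nice set has exactly 4 elements. -/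
/-! Reduce coprime pairs modulo a prime `p > k`. Two elements of a `k`-nice set with the same image
on the projective line over `ZMod p` have determinant divisible by `p` and of absolute value less
than `p`, hence zero, so they agree up to sign and therefore coincide. A `k`-nice set thus has at
most `p + 1` elements. For `1 ≤ k` the pairs `(1, 0), (0, 1), (1, 1), …, (k, 1)` form a `k`-nice set
of size `k + 2`, and the two bounds meet when `k + 1` is prime. -/

open scoped LinearAlgebra.Projectivization

section CoprimePairs

variable {R K : Type*} [CommRing R] [Field K]

theorem exists_unit_smul_eq_of_isCoprime_of_cross_eq {v w : R × R} (hv : IsCoprime v.1 v.2)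
    (hw : IsCoprime w.1 w.2) (h : v.1 * w.2 = w.1 * v.2) : ∃ u : Rˣ, u • v = w := by
  obtain ⟨a, b, hab⟩ := hv
  obtain ⟨c, d, hcd⟩ := hw
  have hfst : (a * w.1 + b * w.2) * v.1 = w.1 := by linear_combination b * h + w.1 * hab
  have hsnd : (a * w.1 + b * w.2) * v.2 = w.2 := by linear_combination w.2 * hab - a * h
  have hunit : (a * w.1 + b * w.2) * (c * v.1 + d * v.2) = 1 := by
    linear_combination c * hfst + d * hsnd + hcd
  exact ⟨Units.mkOfMulEqOne _ _ hunit, Prod.ext hfst hsnd⟩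

/-- The reduction of a coprime pair along a ring homomorphism `f : R →+* K` to a field, as a point
of the projective line over `K`. Coprimality keeps the image of the pair nonzero. -/
def projReduction (f : R →+* K) (v : {v : R × R // IsCoprime v.1 v.2}) : ℙ K (K × K) :=
  .mk K (f v.1.1, f v.1.2) fun h ↦
    (v.2.map f).ne_zero_or_ne_zero.elim (· (congrArg Prod.fst h)) (· (congrArg Prod.snd h))

theorem map_cross_eq_of_projReduction_eq {f : R →+* K} {v w : {v : R × R // IsCoprime v.1 v.2}}
    (h : projReduction f v = projReduction f w) : f (v.1.1 * w.1.2) = f (w.1.1 * v.1.2) := by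
  obtain ⟨a, ha⟩ := (Projectivization.mk_eq_mk_iff' K _ _ _ _).1 h
  have hfst : a * f w.1.1 = f v.1.1 := congrArg Prod.fst ha
  have hsnd : a * f w.1.2 = f v.1.2 := congrArg Prod.snd ha
  rw [map_mul, map_mul, ← hfst, ← hsnd]
  ring

theorem card_projectivization_prod_self [Finite K] : Nat.card (ℙ K (K × K)) = Nat.card K + 1 :=
  Projectivization.card_of_finrank_two K (K × K) (by simp)

end CoprimePairs

namespace IsKNice

variable {k : ℕ} {Q : Set (ℤ × ℤ)}

theorem isCoprime (hQ : IsKNice k Q) {v : ℤ × ℤ} (hv : v ∈ Q) : IsCoprime v.1 v.2 :=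
  Int.isCoprime_iff_gcd_eq_one.2 (hQ.1 v hv).2

theorem eq_of_cross_eq (hQ : IsKNice k Q) {v w : ℤ × ℤ} (hv : v ∈ Q) (hw : w ∈ Q)
    (h : v.1 * w.2 = w.1 * v.2) : v = w := by
  obtain ⟨u, rfl⟩ :=
    exists_unit_smul_eq_of_isCoprime_of_cross_eq (hQ.isCoprime hv) (hQ.isCoprime hw) h
  rcases Int.units_eq_one_or u with rfl | rfl
  · exact (one_smul _ v).symm
  · exact absurd (by simpa using hw) (hQ.2.1 v hv)

theorem projReduction_injective (hQ : IsKNice k Q) {p : ℕ} [Fact p.Prime] (hkp : k < p) :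
    Function.Injective fun v : Q ↦
      projReduction (Int.castRingHom (ZMod p)) ⟨v.1, hQ.isCoprime v.2⟩ := by
  rintro ⟨v, hv⟩ ⟨w, hw⟩ h
  have hmod : ((v.1 * w.2 - w.1 * v.2 : ℤ) : ZMod p) = 0 := by
    rw [Int.cast_sub, sub_eq_zero]
    exact map_cross_eq_of_projReduction_eq h
  have hdvd : (p : ℤ) ∣ v.1 * w.2 - w.1 * v.2 := (ZMod.intCast_zmod_eq_zero_iff_dvd _ p).1 hmod
  have hlt : |v.1 * w.2 - w.1 * v.2| < p := (hQ.2.2 v hv w hw).trans_lt (mod_cast hkp)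
  have hcross : v.1 * w.2 - w.1 * v.2 = 0 := Int.eq_zero_of_abs_lt_dvd hdvd hlt
  exact Subtype.ext (hQ.eq_of_cross_eq hv hw (sub_eq_zero.1 hcross))

theorem finite_and_ncard_le_of_lt_prime (hQ : IsKNice k Q) {p : ℕ} (hp : p.Prime) (hkp : k < p) :
    Q.Finite ∧ Q.ncard ≤ p + 1 := by
  have : Fact p.Prime := ⟨hp⟩
  have hinj := hQ.projReduction_injective hkp
  refine ⟨Set.finite_coe_iff.1 (Finite.of_injective _ hinj), ?_⟩
  calc
    Q.ncard = Nat.card Q := (Nat.card_coe_set_eq Q).symm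
    _ ≤ Nat.card (ℙ (ZMod p) (ZMod p × ZMod p)) := Nat.card_le_card_of_injective _ hinj
    _ = p + 1 := by rw [card_projectivization_prod_self, Nat.card_zmod]

end IsKNice

/-- The pairs `(1, 0), (0, 1), (1, 1), …, (k, 1)`, a `k`-nice set of size `k + 2` when `1 ≤ k`. -/
def extremalNiceSet (k : ℕ) : Set (ℤ × ℤ) :=
  insert (1, 0) ((fun m ↦ (m, 1)) '' Set.Icc 0 (k : ℤ))

theorem isKNice_extremalNiceSet {k : ℕ} (hk : 1 ≤ k) : IsKNice k (extremalNiceSet k) := by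
  refine ⟨?_, ?_, ?_⟩
  · rintro _ (rfl | ⟨m, -, rfl⟩) <;> simp
  · rintro _ (rfl | ⟨m, -, rfl⟩) <;> simp [extremalNiceSet]
  · rintro _ (rfl | ⟨m, ⟨hm, hmk⟩, rfl⟩) _ (rfl | ⟨n, ⟨hn, hnk⟩, rfl⟩) <;>
      simp only [abs_le] <;> omega

theorem finite_extremalNiceSet (k : ℕ) : (extremalNiceSet k).Finite :=
  ((Set.finite_Icc _ _).image _).insert _

theorem ncard_extremalNiceSet (k : ℕ) : (extremalNiceSet k).ncard = k + 2 := by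
  have hinj : Function.Injective fun m : ℤ ↦ (m, (1 : ℤ)) := Prod.mk_left_injective 1
  have hIcc : (Set.Icc 0 (k : ℤ)).ncard = k + 1 := by
    rw [← Finset.coe_Icc, Set.ncard_coe_finset, Int.card_Icc]
    omega
  rw [extremalNiceSet, Set.ncard_insert_of_notMem (by simp) ((Set.finite_Icc _ _).image _),
    Set.ncard_image_of_injective _ hinj, hIcc]

theorem max_size_one_nice_and_two_nice_general {k : ℕ} (hk : (k + 1).Prime) :
    (∀ Q : Set (ℤ × ℤ), IsKNice k Q → Q.Finite ∧ Q.ncard ≤ k + 2) ∧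
    (∃ Q : Set (ℤ × ℤ), IsKNice k Q ∧ Q.Finite ∧ Q.ncard = k + 2) :=
  ⟨fun _ hQ ↦ hQ.finite_and_ncard_le_of_lt_prime hk k.lt_succ_self,
    extremalNiceSet k, isKNice_extremalNiceSet (Nat.succ_lt_succ_iff.1 hk.one_lt),
    finite_extremalNiceSet k, ncard_extremalNiceSet k⟩

theorem max_size_one_nice_and_two_nice :
    (∀ Q : Set (ℤ × ℤ), IsKNice 1 Q → Q.Finite ∧ Q.ncard ≤ 3) ∧
    (∃ Q : Set (ℤ × ℤ), IsKNice 1 Q ∧ Q.Finite ∧ Q.ncard = 3) ∧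
    (∀ Q : Set (ℤ × ℤ), IsKNice 2 Q → Q.Finite ∧ Q.ncard ≤ 4) ∧
    (∃ Q : Set (ℤ × ℤ), IsKNice 2 Q ∧ Q.Finite ∧ Q.ncard = 4) := by
  rw [← and_assoc]
  exact ⟨max_size_one_nice_and_two_nice_general Nat.prime_two,
    max_size_one_nice_and_two_nice_general Nat.prime_three⟩
end

section
/- Let k ∈ ℕ and let Q ⊆ ℤ² be an inclusion-wise maximal k-nice set whose height is h, where 1 ≤ h ≤ k. Then there exists a k-nice set Q' equivalent to Q of height h such that (1,0) ∈ Q', (0,1) ∈ Q', (1,1) ∈ Q', and Q' ⊆ {0, 1, …, k} × {0, 1, …, h}. -/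
/-- Application of an integer `2 × 2` matrix to a pair of integers. -/
def matApply (A : Matrix (Fin 2) (Fin 2) ℤ) (p : ℤ × ℤ) : ℤ × ℤ :=
  (A 0 0 * p.1 + A 0 1 * p.2, A 1 0 * p.1 + A 1 1 * p.2)

/-- `Q` and `Q'` are equivalent if `Q'` is obtained from `A • Q`, for some unimodular
integer matrix `A`, by negating a subset of its elements. -/
def EquivSets (Q Q' : Set (ℤ × ℤ)) : Prop :=
  ∃ A : Matrix (Fin 2) (Fin 2) ℤ, |A.det| = 1 ∧
    ∃ f : ℤ × ℤ → ℤ × ℤ, (∀ x, f x = x ∨ f x = -x) ∧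
      Q' = f '' (matApply A '' Q)

/-!
Up to sign, a maximal `k`-nice set contains every primitive vector whose determinant against each of
its elements is at most `k` in absolute value, and maximality survives equivalence. Take the largest
integer `a` such that the shear `(x, y) ↦ (x - a y, y)` gives every element coordinates of weakly
equal signs; sign changes then move the set into the first quadrant. As `a` is the largest, some
element `u` lies strictly above the diagonal. The determinant bound against `u`, together with
`y ≤ h ≤ k`, yields `x ≤ k` for all elements `(x, y)`. Hence `(1, 0)`, `(0, 1)` and `(1, 1)` have
determinants at most `k` against the whole set, so maximality puts them into it.
-/

/-- The determinant of two vectors of `ℤ²`, whose absolute value is bounded in `IsKNice`. -/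
def pairDet (p q : ℤ × ℤ) : ℤ := p.1 * q.2 - q.1 * p.2

lemma pairDet_self (p : ℤ × ℤ) : pairDet p p = 0 := sub_self _

lemma neg_pairDet (p q : ℤ × ℤ) : -pairDet p q = pairDet q p := neg_sub _ _

lemma pairDet_neg_left (p q : ℤ × ℤ) : pairDet (-p) q = -pairDet p q := by
  simp only [pairDet, Prod.fst_neg, Prod.snd_neg]
  ring

lemma pairDet_neg_right (p q : ℤ × ℤ) : pairDet p (-q) = -pairDet p q := by
  rw [← neg_pairDet, pairDet_neg_left, neg_pairDet]

lemma abs_pairDet_comm (p q : ℤ × ℤ) : |pairDet p q| = |pairDet q p| := by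
  rw [← neg_pairDet, abs_neg]

lemma abs_pairDet_congr {p p' q q' : ℤ × ℤ} (hp : p' = p ∨ p' = -p) (hq : q' = q ∨ q' = -q) :
    |pairDet p' q'| = |pairDet p q| := by
  rcases hp with rfl | rfl <;> rcases hq with rfl | rfl <;>
    simp only [pairDet_neg_left, pairDet_neg_right, abs_neg]

lemma ne_zero_of_isCoprime {p : ℤ × ℤ} (hp : IsCoprime p.1 p.2) : p ≠ 0 := by
  rintro rfl
  exact not_isCoprime_zero_zero hp

lemma isCoprime_neg_iff {p : ℤ × ℤ} : IsCoprime (-p).1 (-p).2 ↔ IsCoprime p.1 p.2 :=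
  IsCoprime.neg_neg_iff _ _

lemma isKNice_iff {k : ℕ} {Q : Set (ℤ × ℤ)} :
    IsKNice k Q ↔ (∀ p ∈ Q, IsCoprime p.1 p.2) ∧ (∀ p ∈ Q, -p ∉ Q) ∧
      ∀ p ∈ Q, ∀ q ∈ Q, |pairDet p q| ≤ k := by
  refine and_congr_left' (forall₂_congr fun p _ => ?_)
  rw [← Int.isCoprime_iff_gcd_eq_one]
  exact and_iff_right_of_imp ne_zero_of_isCoprime

lemma IsKNice.insert {k : ℕ} {Q : Set (ℤ × ℤ)} {v : ℤ × ℤ} (hQ : IsKNice k Q)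
    (hv : IsCoprime v.1 v.2) (hneg : -v ∉ Q) (hdet : ∀ q ∈ Q, |pairDet v q| ≤ k) :
    IsKNice k (insert v Q) := by
  rw [isKNice_iff] at hQ ⊢
  obtain ⟨hcop, hanti, hbound⟩ := hQ
  refine ⟨?_, ?_, ?_⟩
  · rintro p (rfl | hp)
    exacts [hv, hcop p hp]
  · rintro p (rfl | hp) (hpv | hnp)
    · exact ne_zero_of_isCoprime hv (neg_eq_self.mp hpv)
    · exact hneg hnp
    · exact hneg (by rwa [← hpv, neg_neg])
    · exact hanti p hp hnp
  · rintro p (rfl | hp) q (rfl | hq)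
    · simp only [pairDet_self, abs_zero, Nat.cast_nonneg]
    · exact hdet q hq
    · exact abs_pairDet_comm p q ▸ hdet p hp
    · exact hbound p hp q hq

lemma maximal_isKNice_iff {k : ℕ} {Q : Set (ℤ × ℤ)} :
    Maximal (IsKNice k) Q ↔ IsKNice k Q ∧ ∀ v : ℤ × ℤ, IsCoprime v.1 v.2 →
      (∀ q ∈ Q, |pairDet v q| ≤ k) → v ∈ Q ∨ -v ∈ Q := by
  refine and_congr_right fun hQ => ⟨fun hmax v hv hdet => ?_, fun hsat T hT hQT v hvT => ?_⟩
  · by_contra! hnot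
    exact hnot.1 <| hmax (hQ.insert hv hnot.2 hdet) (Set.subset_insert v Q) (Set.mem_insert v Q)
  · obtain ⟨hcop, hanti, hbound⟩ := isKNice_iff.mp hT
    refine (hsat v (hcop v hvT) fun q hq => hbound v hvT q (hQT hq)).resolve_right fun hnv => ?_
    exact hanti v hvT (hQT hnv)

section Equivalence

lemma matApply_mul (A B : Matrix (Fin 2) (Fin 2) ℤ) (p : ℤ × ℤ) :
    matApply (A * B) p = matApply A (matApply B p) := by
  ext <;> simp only [matApply, Matrix.mul_apply, Fin.sum_univ_two] <;> ring

lemma matApply_one (p : ℤ × ℤ) : matApply 1 p = p := by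
  simp [matApply]

lemma matApply_neg (A : Matrix (Fin 2) (Fin 2) ℤ) (p : ℤ × ℤ) :
    matApply A (-p) = -matApply A p := by
  ext <;> simp only [matApply, Prod.fst_neg, Prod.snd_neg] <;> ring

lemma pairDet_matApply (A : Matrix (Fin 2) (Fin 2) ℤ) (p q : ℤ × ℤ) :
    pairDet (matApply A p) (matApply A q) = A.det * pairDet p q := by
  simp only [pairDet, matApply, Matrix.det_fin_two]
  ring

lemma isCoprime_of_isCoprime_matApply {A : Matrix (Fin 2) (Fin 2) ℤ} {p : ℤ × ℤ}
    (h : IsCoprime (matApply A p).1 (matApply A p).2) : IsCoprime p.1 p.2 := by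
  obtain ⟨a, b, hab⟩ := h
  refine ⟨a * A 0 0 + b * A 1 0, a * A 0 1 + b * A 1 1, ?_⟩
  simp only [matApply] at hab
  linear_combination hab

variable {A : Matrix (Fin 2) (Fin 2) ℤ}

lemma matApply_inv_matApply (hA : |A.det| = 1) (p : ℤ × ℤ) :
    matApply A⁻¹ (matApply A p) = p := by
  rw [← matApply_mul, Matrix.nonsing_inv_mul _ (Int.isUnit_iff_abs_eq.mpr hA), matApply_one]

lemma matApply_matApply_inv (hA : |A.det| = 1) (p : ℤ × ℤ) :
    matApply A (matApply A⁻¹ p) = p := by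
  rw [← matApply_mul, Matrix.mul_nonsing_inv _ (Int.isUnit_iff_abs_eq.mpr hA), matApply_one]

lemma matApply_injective (hA : |A.det| = 1) : Function.Injective (matApply A) :=
  Function.LeftInverse.injective (matApply_inv_matApply hA)

lemma isCoprime_matApply_iff (hA : |A.det| = 1) {p : ℤ × ℤ} :
    IsCoprime (matApply A p).1 (matApply A p).2 ↔ IsCoprime p.1 p.2 := by
  refine ⟨isCoprime_of_isCoprime_matApply, fun hp => ?_⟩
  rw [← matApply_inv_matApply hA p] at hp
  exact isCoprime_of_isCoprime_matApply hp

lemma abs_pairDet_matApply (hA : |A.det| = 1) (p q : ℤ × ℤ) :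
    |pairDet (matApply A p) (matApply A q)| = |pairDet p q| := by
  rw [pairDet_matApply, abs_mul, hA, one_mul]

variable {k : ℕ} {Q Q' : Set (ℤ × ℤ)}

lemma IsKNice.image_matApply (hQ : IsKNice k Q) (hA : |A.det| = 1) :
    IsKNice k (matApply A '' Q) := by
  rw [isKNice_iff] at hQ ⊢
  obtain ⟨hcop, hanti, hbound⟩ := hQ
  simp only [Set.forall_mem_image]
  refine ⟨fun p hp => (isCoprime_matApply_iff hA).mpr (hcop p hp), fun p hp hnp => ?_,
    fun p hp q hq => (abs_pairDet_matApply hA p q).trans_le (hbound p hp q hq)⟩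
  rw [← matApply_neg, (matApply_injective hA).mem_set_image] at hnp
  exact hanti p hp hnp

lemma maximal_isKNice_image_matApply (hQ : Maximal (IsKNice k) Q) (hA : |A.det| = 1) :
    Maximal (IsKNice k) (matApply A '' Q) := by
  rw [maximal_isKNice_iff] at hQ ⊢
  refine ⟨hQ.1.image_matApply hA, fun v hv hdet => ?_⟩
  obtain ⟨w, rfl⟩ : ∃ w, matApply A w = v := ⟨_, matApply_matApply_inv hA v⟩
  rw [← matApply_neg, (matApply_injective hA).mem_set_image, (matApply_injective hA).mem_set_image]
  refine hQ.2 w ((isCoprime_matApply_iff hA).mp hv) fun q hq => ?_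
  exact (abs_pairDet_matApply hA w q).symm.trans_le (hdet _ (Set.mem_image_of_mem _ hq))

variable {f : ℤ × ℤ → ℤ × ℤ}

lemma IsKNice.image_of_eq_or_neg (hQ : IsKNice k Q) (hf : ∀ x, f x = x ∨ f x = -x) :
    IsKNice k (f '' Q) := by
  rw [isKNice_iff] at hQ ⊢
  obtain ⟨hcop, hanti, hbound⟩ := hQ
  have hcop' : ∀ p ∈ Q, IsCoprime (f p).1 (f p).2 := fun p hp => by
    rcases hf p with h | h <;> rw [h]
    exacts [hcop p hp, isCoprime_neg_iff.mpr (hcop p hp)]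
  simp only [Set.forall_mem_image]
  refine ⟨hcop', ?_, fun p hp q hq => (abs_pairDet_congr (hf p) (hf q)).trans_le (hbound p hp q hq)⟩
  rintro p hp ⟨q, hq, hqp⟩
  obtain rfl | rfl : q = p ∨ q = -p := by
    rcases hf p with hfp | hfp <;> rcases hf q with hfq | hfq <;>
      simp only [hfp, hfq, neg_eq_iff_eq_neg, neg_neg] at hqp <;> tauto
  · exact ne_zero_of_isCoprime (hcop' q hq) (self_eq_neg.mp hqp)
  · exact hanti p hp hq

lemma maximal_isKNice_image_of_eq_or_neg (hQ : Maximal (IsKNice k) Q)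
    (hf : ∀ x, f x = x ∨ f x = -x) : Maximal (IsKNice k) (f '' Q) := by
  rw [maximal_isKNice_iff] at hQ ⊢
  refine ⟨hQ.1.image_of_eq_or_neg hf, fun v hv hdet => ?_⟩
  have hvQ : v ∈ Q ∨ -v ∈ Q := hQ.2 v hv fun q hq =>
    (abs_pairDet_congr (Or.inl rfl) (hf q)).symm.trans_le (hdet _ (Set.mem_image_of_mem f hq))
  rcases hvQ with hv | hv
  · exact (hf v).imp (fun h => ⟨v, hv, h⟩) fun h => ⟨v, hv, h⟩
  · exact (hf (-v)).symm.imp (fun h => ⟨-v, hv, h.trans (neg_neg v)⟩) fun h => ⟨-v, hv, h⟩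

lemma EquivSets.maximal_isKNice (h : EquivSets Q Q') (hQ : Maximal (IsKNice k) Q) :
    Maximal (IsKNice k) Q' := by
  obtain ⟨A, hA, f, hf, rfl⟩ := h
  exact maximal_isKNice_image_of_eq_or_neg (maximal_isKNice_image_matApply hQ hA) hf

end Equivalence

section Normalization

variable {Q : Set (ℤ × ℤ)}

lemma HeightEq.image {h : ℕ} (hQ : HeightEq Q h) {g : ℤ × ℤ → ℤ × ℤ}
    (hg : ∀ p, |(g p).2| = |p.2|) : HeightEq (g '' Q) h := by
  obtain ⟨hle, p, hp, hph⟩ := hQ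
  refine ⟨?_, g p, Set.mem_image_of_mem g hp, (hg p).trans hph⟩
  rintro _ ⟨q, hq, rfl⟩
  exact (hg q).trans_le (hle q hq)

/-- The matrix of the horizontal shear `(x, y) ↦ (x - a y, y)`. -/
def shear (a : ℤ) : Matrix (Fin 2) (Fin 2) ℤ := !![1, -a; 0, 1]

lemma abs_det_shear (a : ℤ) : |(shear a).det| = 1 := by
  simp [shear, Matrix.det_fin_two]

lemma matApply_shear (a : ℤ) (p : ℤ × ℤ) : matApply (shear a) p = (p.1 - a * p.2, p.2) := by
  simp [matApply, shear, sub_eq_add_neg]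

/-- The representative of `{p, -p}` in the closed first quadrant, if there is one; otherwise the
junk value `-p`, so that the result is `p` or `-p` in all cases. -/
def quadrantRep (p : ℤ × ℤ) : ℤ × ℤ := if 0 ≤ p then p else -p

lemma quadrantRep_eq_or_neg (p : ℤ × ℤ) : quadrantRep p = p ∨ quadrantRep p = -p :=
  ite_eq_or_eq _ _ _

lemma abs_snd_quadrantRep (p : ℤ × ℤ) : |(quadrantRep p).2| = |p.2| := by
  rcases quadrantRep_eq_or_neg p with h | h <;> simp only [h, Prod.snd_neg, abs_neg]

lemma quadrantRep_nonneg {p : ℤ × ℤ} (hp : 0 ≤ p.1 * p.2) : 0 ≤ quadrantRep p := by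
  unfold quadrantRep
  split_ifs with h
  · exact h
  · exact neg_nonneg.mpr ((mul_nonneg_iff.mp hp).resolve_left h)

lemma fst_quadrantRep_lt_snd {p : ℤ × ℤ} (hp : 0 ≤ p.1 * p.2) (hlt : (p.1 - p.2) * p.2 < 0) :
    (quadrantRep p).1 < (quadrantRep p).2 := by
  have hsnd : 0 ≤ (quadrantRep p).2 := (quadrantRep_nonneg hp).2
  have hneg : ((quadrantRep p).1 - (quadrantRep p).2) * (quadrantRep p).2 < 0 := by
    rcases quadrantRep_eq_or_neg p with h | h <;> rw [h]
    · exact hlt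
    · simp only [Prod.fst_neg, Prod.snd_neg]
      linarith
  exact sub_neg.mp (neg_of_mul_neg_left hneg hsnd)

lemma abs_fst_le_of_abs_pairDet_le {p w : ℤ × ℤ} {c : ℤ} (hw : w.2 ≠ 0) (hc : |pairDet p w| ≤ c) :
    |p.1| ≤ |w.1| * |p.2| + c :=
  calc |p.1| ≤ |p.1| * |w.2| := le_mul_of_one_le_right (abs_nonneg _) (Int.one_le_abs hw)
    _ = |w.1 * p.2 + pairDet p w| := by rw [← abs_mul, pairDet, add_sub_cancel]
    _ ≤ |w.1 * p.2| + |pairDet p w| := abs_add_le _ _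
    _ ≤ |w.1| * |p.2| + c := by rw [abs_mul]; gcongr

lemma sub_mul_mul_nonneg_of_abs_pairDet_le {p w : ℤ × ℤ} {c : ℤ} (hw : w.2 ≠ 0)
    (hc : |pairDet p w| ≤ c) : 0 ≤ (p.1 - -(|w.1| + c) * p.2) * p.2 := by
  have hc0 : 0 ≤ c := (abs_nonneg _).trans hc
  have hsq : |p.2| ≤ p.2 ^ 2 := (Int.le_self_sq _).trans_eq (sq_abs _)
  have hprod : -(p.1 * p.2) ≤ (|w.1| + c) * p.2 ^ 2 :=
    calc -(p.1 * p.2) ≤ |p.1| * |p.2| := by rw [← abs_mul]; exact neg_le_abs _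
      _ ≤ (|w.1| * |p.2| + c) * |p.2| := by gcongr; exact abs_fst_le_of_abs_pairDet_le hw hc
      _ = |w.1| * p.2 ^ 2 + c * |p.2| := by rw [← sq_abs p.2]; ring
      _ ≤ |w.1| * p.2 ^ 2 + c * p.2 ^ 2 := by gcongr
      _ = (|w.1| + c) * p.2 ^ 2 := by ring
  linarith

lemma exists_greatest_shear {w : ℤ × ℤ} {c : ℤ} (hwQ : w ∈ Q) (hw : w.2 ≠ 0)
    (hc : ∀ p ∈ Q, |pairDet p w| ≤ c) :
    ∃ a : ℤ, (∀ p ∈ Q, 0 ≤ (p.1 - a * p.2) * p.2) ∧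
      ∃ u ∈ Q, (u.1 - (a + 1) * u.2) * u.2 < 0 := by
  have hbdd : ∀ a : ℤ, (∀ p ∈ Q, 0 ≤ (p.1 - a * p.2) * p.2) → a ≤ |w.1| := fun a ha => by
    refine le_of_mul_le_mul_right ?_ (by positivity : 0 < w.2 ^ 2)
    calc a * w.2 ^ 2 ≤ w.1 * w.2 := by linarith [ha w hwQ]
      _ ≤ |w.1| * |w.2| := by rw [← abs_mul]; exact le_abs_self _
      _ ≤ |w.1| * w.2 ^ 2 := by gcongr; exact (Int.le_self_sq _).trans_eq (sq_abs _)
  obtain ⟨a, ha, hgreatest⟩ := Int.exists_greatest_of_bdd ⟨_, hbdd⟩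
    ⟨_, fun p hp => sub_mul_mul_nonneg_of_abs_pairDet_le hw (hc p hp)⟩
  refine ⟨a, ha, ?_⟩
  by_contra! hsucc
  exact (lt_add_one a).not_ge (hgreatest (a + 1) hsucc)

lemma exists_equivSets_nonneg {k h : ℕ} (hQ : IsKNice k Q) (hht : HeightEq Q h) (hh : h ≠ 0) :
    ∃ P, EquivSets Q P ∧ HeightEq P h ∧ (∀ p ∈ P, 0 ≤ p) ∧ ∃ u ∈ P, u.1 < u.2 := by
  obtain ⟨w, hwQ, hwh⟩ := hht.2
  have hw : w.2 ≠ 0 := abs_ne_zero.mp (hwh.trans_ne (Nat.cast_ne_zero.mpr hh))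
  obtain ⟨a, ha, u, hu, hlt⟩ := exists_greatest_shear hwQ hw fun p hp => hQ.2.2 p hp w hwQ
  have hmul : ∀ p ∈ Q, 0 ≤ (matApply (shear a) p).1 * (matApply (shear a) p).2 := fun p hp => by
    rw [matApply_shear]
    exact ha p hp
  refine ⟨quadrantRep '' (matApply (shear a) '' Q),
    ⟨shear a, abs_det_shear a, quadrantRep, quadrantRep_eq_or_neg, rfl⟩,
    (hht.image fun p => by rw [matApply_shear]).image abs_snd_quadrantRep, ?_,
    _, Set.mem_image_of_mem _ (Set.mem_image_of_mem _ hu), fst_quadrantRep_lt_snd (hmul u hu) ?_⟩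
  · simp only [Set.forall_mem_image]
    exact fun p hp => quadrantRep_nonneg (hmul p hp)
  · rw [matApply_shear]
    linarith

end Normalization

lemma fst_le_of_pairDet_le {p u : ℤ × ℤ} {c : ℤ} (hu : 0 ≤ u.1) (hlt : u.1 < u.2) (hp : 0 ≤ p.2)
    (hpc : p.2 ≤ c) (hdet : pairDet p u ≤ c) : p.1 ≤ c := by
  have hle : u.1 ≤ u.2 - 1 := Int.le_sub_one_of_lt hlt
  refine le_of_mul_le_mul_right ?_ (hu.trans_lt hlt)
  calc p.1 * u.2 = pairDet p u + u.1 * p.2 := by rw [pairDet, sub_add_cancel]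
    _ ≤ c + (u.2 - 1) * c := add_le_add hdet (mul_le_mul hle hpc hp (hu.trans hle))
    _ = c * u.2 := by ring

lemma mem_of_maximal_isKNice_of_nonneg {k : ℕ} {P : Set (ℤ × ℤ)} (hP : Maximal (IsKNice k) P)
    (hnonneg : ∀ p ∈ P, 0 ≤ p) {v : ℤ × ℤ} (hv0 : 0 ≤ v) (hv : IsCoprime v.1 v.2)
    (hdet : ∀ q ∈ P, |pairDet v q| ≤ k) : v ∈ P := by
  refine ((maximal_isKNice_iff.mp hP).2 v hv hdet).resolve_right fun hneg => ?_
  exact ne_zero_of_isCoprime hv (hv0.antisymm' (neg_nonneg.mp (hnonneg _ hneg)))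

theorem maximal_kNice_equiv_normal_form (k h : ℕ) (hh1 : 1 ≤ h) (hhk : h ≤ k)
    (Q : Set (ℤ × ℤ)) (hQ : IsKNice k Q)
    (hmax : ∀ Q' : Set (ℤ × ℤ), Q ⊆ Q' → IsKNice k Q' → Q' = Q)
    (hht : HeightEq Q h) :
    ∃ Q' : Set (ℤ × ℤ), EquivSets Q Q' ∧ IsKNice k Q' ∧ HeightEq Q' h ∧
      ((1 : ℤ), (0 : ℤ)) ∈ Q' ∧ ((0 : ℤ), (1 : ℤ)) ∈ Q' ∧ ((1 : ℤ), (1 : ℤ)) ∈ Q' ∧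
      ∀ p ∈ Q', 0 ≤ p.1 ∧ p.1 ≤ (k : ℤ) ∧ 0 ≤ p.2 ∧ p.2 ≤ (h : ℤ) := by
  have hQmax : Maximal (IsKNice k) Q := ⟨hQ, fun T hT hQT => (hmax T hQT hT).le⟩
  obtain ⟨P, hQP, hPht, hnonneg, u, hu, hlt⟩ :=
    exists_equivSets_nonneg hQ hht (Nat.one_le_iff_ne_zero.mp hh1)
  have hP : Maximal (IsKNice k) P := hQP.maximal_isKNice hQmax
  have hsnd : ∀ p ∈ P, p.2 ≤ h := fun p hp => (le_abs_self _).trans (hPht.1 p hp)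
  have hsndk : ∀ p ∈ P, p.2 ≤ k := fun p hp => (hsnd p hp).trans (Nat.cast_le.mpr hhk)
  have hfst : ∀ p ∈ P, p.1 ≤ k := fun p hp =>
    fst_le_of_pairDet_le (hnonneg u hu).1 hlt (hnonneg p hp).2 (hsndk p hp)
      ((le_abs_self _).trans (hP.prop.2.2 p hp u hu))
  have hmem {v : ℤ × ℤ} := mem_of_maximal_isKNice_of_nonneg (v := v) hP hnonneg
  refine ⟨P, hQP, hP.prop, hPht, ?_, ?_, ?_,
    fun p hp => ⟨(hnonneg p hp).1, hfst p hp, (hnonneg p hp).2, hsnd p hp⟩⟩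
  · refine hmem (by decide) isCoprime_one_left fun q hq => ?_
    simpa [pairDet, abs_of_nonneg (hnonneg q hq).2] using hsndk q hq
  · refine hmem (by decide) isCoprime_one_right fun q hq => ?_
    simpa [pairDet, abs_of_nonneg (hnonneg q hq).1] using hfst q hq
  · refine hmem (by decide) isCoprime_one_left fun q hq => ?_
    simpa [pairDet] using
      abs_sub_le_of_nonneg_of_le (hnonneg q hq).2 (hsndk q hq) (hnonneg q hq).1 (hfst q hq)
end

section
/- For every integer ℓ ≥ 1, the sum of 1/(i·j) over all pairs of integers (i,j) with 1 ≤ i ≤ ℓ, 1 ≤ j ≤ ℓ, i + j ≥ ℓ + 1, and gcd(i,j) = 1 is equal to 1. -/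
/-!
The coprime pairs `(i, j)` in `[1, n]²` with `i + j > n` are the pairs of denominators of
consecutive terms of the Farey sequence of order `n`, and `1 / (i * j)` is the gap between these
terms. Passing from `n` to `n + 1` inserts the mediant into the gaps with `i + j = n + 1`: such a
pair `(i, j)` is replaced by `(i, i + j)` and `(i + j, j)`, and all other pairs stay. A sum of
`f i j` over these pairs is therefore independent of `n` as soon as
`f i j = f i (i + j) + f (i + j) j`.
-/

open Finset

/-- The pairs of denominators of consecutive terms of the Farey sequence of order `n` on `[0, 1]`,
which index its gaps; the definition is arithmetic, so that no fractions occur. -/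
def fareyPairs (n : ℕ) : Finset (ℕ × ℕ) :=
  {p ∈ Icc 1 n ×ˢ Icc 1 n | n + 1 ≤ p.1 + p.2 ∧ p.1.gcd p.2 = 1}

theorem fareyPairs_one : fareyPairs 1 = {(1, 1)} := by decide

namespace fareyPairs

theorem mem_iff {n i j : ℕ} :
    (i, j) ∈ fareyPairs n ↔
      ((1 ≤ i ∧ i ≤ n) ∧ 1 ≤ j ∧ j ≤ n) ∧ n + 1 ≤ i + j ∧ i.Coprime j := by
  simp only [fareyPairs, mem_filter, mem_product, mem_Icc, Nat.Coprime]

theorem eq_one_of_mem_diag {n i : ℕ} (h : (i, i) ∈ fareyPairs n) : i = 1 :=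
  (Nat.coprime_self i).1 (mem_iff.1 h).2.2

theorem swap_mem_iff {n : ℕ} {p : ℕ × ℕ} : p.swap ∈ fareyPairs n ↔ p ∈ fareyPairs n := by
  rw [Prod.swap, mem_iff, mem_iff, and_comm (a := 1 ≤ p.2 ∧ _), add_comm p.2, Nat.coprime_comm]

theorem filter_snd_ne_and_fst_eq_succ {n : ℕ} (hn : 1 ≤ n) :
    {p ∈ fareyPairs (n + 1) | p.2 ≠ n + 1 ∧ p.1 = n + 1} =
      {p ∈ fareyPairs (n + 1) | p.1 = n + 1} := by
  refine filter_congr ?_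
  rintro ⟨i, j⟩ hij
  refine and_iff_right_of_imp ?_
  rintro (rfl : i = n + 1) (rfl : j = n + 1)
  have := eq_one_of_mem_diag hij
  lia

theorem filter_ne_succ (n : ℕ) :
    {p ∈ fareyPairs (n + 1) | p.2 ≠ n + 1 ∧ p.1 ≠ n + 1} =
      {p ∈ fareyPairs n | p.1 + p.2 ≠ n + 1} := by
  ext ⟨i, j⟩
  simp only [mem_filter, mem_iff]
  grind

section Sum

variable {M : Type*} [AddCommMonoid M] (f : ℕ → ℕ → M) {n : ℕ}

theorem sum_filter_snd_eq_succ (hn : 1 ≤ n) :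
    ∑ p ∈ fareyPairs (n + 1) with p.2 = n + 1, f p.1 p.2 =
      ∑ p ∈ fareyPairs n with p.1 + p.2 = n + 1, f p.1 (p.1 + p.2) := by
  symm
  refine sum_nbij' (fun p ↦ (p.1, p.1 + p.2)) (fun p ↦ (p.1, p.2 - p.1)) ?_ ?_ ?_ ?_ ?_
  · rintro ⟨i, j⟩ hp
    simp only [mem_filter, mem_iff, Nat.coprime_self_add_right] at hp ⊢
    grind
  · rintro ⟨i, j⟩ hp
    obtain ⟨hij, rfl : j = n + 1⟩ := mem_filter.1 hp
    have hne : i ≠ n + 1 := by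
      rintro rfl
      have := eq_one_of_mem_diag hij
      lia
    obtain ⟨⟨⟨hi, hin⟩, -⟩, -, hcop⟩ := mem_iff.1 hij
    have hcop' : i.Coprime (n + 1 - i) := (Nat.coprime_sub_self_right hin).2 hcop
    simp only [mem_filter, mem_iff]
    grind
  all_goals grind [mem_iff]

theorem sum_filter_fst_eq_succ (hn : 1 ≤ n) :
    ∑ p ∈ fareyPairs (n + 1) with p.1 = n + 1, f p.1 p.2 =
      ∑ p ∈ fareyPairs n with p.1 + p.2 = n + 1, f (p.1 + p.2) p.2 := by
  calc ∑ p ∈ fareyPairs (n + 1) with p.1 = n + 1, f p.1 p.2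
    _ = ∑ p ∈ fareyPairs (n + 1) with p.2 = n + 1, f p.2 p.1 :=
      sum_equiv (Equiv.prodComm ℕ ℕ) (by simp [swap_mem_iff]) (by simp)
    _ = ∑ p ∈ fareyPairs n with p.1 + p.2 = n + 1, f (p.1 + p.2) p.1 :=
      sum_filter_snd_eq_succ (fun i j ↦ f j i) hn
    _ = ∑ p ∈ fareyPairs n with p.1 + p.2 = n + 1, f (p.1 + p.2) p.2 :=
      sum_equiv (Equiv.prodComm ℕ ℕ) (by simp [swap_mem_iff, add_comm]) (by simp [add_comm])

theorem sum_succ (hn : 1 ≤ n) :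
    ∑ p ∈ fareyPairs (n + 1), f p.1 p.2 =
      ∑ p ∈ fareyPairs n with p.1 + p.2 = n + 1, (f p.1 (p.1 + p.2) + f (p.1 + p.2) p.2) +
        ∑ p ∈ fareyPairs n with p.1 + p.2 ≠ n + 1, f p.1 p.2 := by
  rw [← sum_filter_add_sum_filter_not (fareyPairs (n + 1)) (fun p ↦ p.2 = n + 1),
    ← sum_filter_add_sum_filter_not {p ∈ fareyPairs (n + 1) | p.2 ≠ n + 1} (fun p ↦ p.1 = n + 1),
    filter_filter, filter_filter, filter_snd_ne_and_fst_eq_succ hn, filter_ne_succ,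
    sum_filter_snd_eq_succ f hn, sum_filter_fst_eq_succ f hn, sum_add_distrib, add_assoc]

variable {f}

theorem sum_eq_of_mediant
    (hf : ∀ i j, 1 ≤ i → 1 ≤ j → i.Coprime j → f i j = f i (i + j) + f (i + j) j) (hn : 1 ≤ n) :
    ∑ p ∈ fareyPairs n, f p.1 p.2 = f 1 1 := by
  induction n, hn using Nat.le_induction with
  | base => rw [fareyPairs_one, sum_singleton]
  | succ n hn ih =>
    have split_gap : ∀ p ∈ {p ∈ fareyPairs n | p.1 + p.2 = n + 1},
        f p.1 (p.1 + p.2) + f (p.1 + p.2) p.2 = f p.1 p.2 := by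
      rintro ⟨i, j⟩ hp
      obtain ⟨⟨⟨hi, -⟩, hj, -⟩, -, hij⟩ := mem_iff.1 (mem_filter.1 hp).1
      exact (hf i j hi hj hij).symm
    rw [sum_succ f hn, sum_congr rfl split_gap, sum_filter_add_sum_filter_not, ih]

end Sum
end fareyPairs

theorem one_div_mul_eq_add_mediant {K : Type*} [Semifield K] {a b : K} (ha : a ≠ 0) (hb : b ≠ 0)
    (hab : a + b ≠ 0) : 1 / (a * b) = 1 / (a * (a + b)) + 1 / ((a + b) * b) := by
  field_simp
  exact add_comm a b

theorem sum_inv_mul_coprime_pairs_eq_one_general {K : Type*} [Semifield K] [CharZero K] {n : ℕ}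
    (hn : 1 ≤ n) : ∑ p ∈ fareyPairs n, (1 : K) / (p.1 * p.2) = 1 := by
  have mediant (i j : ℕ) (hi : 1 ≤ i) (hj : 1 ≤ j) (_ : i.Coprime j) :
      (1 : K) / (i * j) = 1 / (i * (i + j : ℕ)) + 1 / ((i + j : ℕ) * j) := by
    rw [Nat.cast_add]
    exact one_div_mul_eq_add_mediant (by norm_cast; lia) (by norm_cast; lia) (by norm_cast; lia)
  calc ∑ p ∈ fareyPairs n, (1 : K) / (p.1 * p.2)
    _ = 1 / ((1 : ℕ) * (1 : ℕ)) := fareyPairs.sum_eq_of_mediant mediant hn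
    _ = 1 := by simp

theorem sum_inv_mul_coprime_pairs_eq_one (ℓ : ℕ) (hℓ : 1 ≤ ℓ) :
    ∑ p ∈ Finset.filter (fun p : ℕ × ℕ => ℓ + 1 ≤ p.1 + p.2 ∧ Nat.gcd p.1 p.2 = 1)
        (Finset.Icc 1 ℓ ×ˢ Finset.Icc 1 ℓ),
      (1 : ℝ) / ((p.1 : ℝ) * (p.2 : ℝ)) = 1 :=
  sum_inv_mul_coprime_pairs_eq_one_general hℓ
end
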